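/- arXiv:1301.6469 — 11 statements merged into one kernel-verified Lean document; each statement's English description precedes it below -/
import Mathlib

section
/- Let w : ℝ → ℝ be positive and differentiable, and let x₁,…,xₙ be distinct real numbers. Fix k and suppose that the function x ↦ w(x)·∏_{l≠k}(x − x_l)² attains a local maximum at x = x_k. Then the Fejér constant at x_k vanishes: C_{k,w} = 2·∑_{l≠k} 1/(x_k − x_l) + w'(x_k)/w(x_k) = 0. -/
open Real Filter Set Finset

/-- If the weighted fundamental function
`x ↦ w(x)·∏_{l≠k}(x - x_l)²` has a local maximum at `x_k`, then the Fejér constant at `x_k`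
vanishes: `2·∑_{l≠k} 1/(x_k - x_l) + w'(x_k)/w(x_k) = 0`. -/
theorem fejer_constant_vanishes_of_isLocalMax
    (w : ℝ → ℝ) (hw_pos : ∀ x, 0 < w x) (hw_diff : Differentiable ℝ w)
    (n : ℕ) (x : Fin n → ℝ) (hinj : Function.Injective x) (k : Fin n)
    (hmax : IsLocalMax (fun t => w t * ∏ l ∈ Finset.univ.erase k, (t - x l) ^ 2) (x k)) :
    2 * ∑ l ∈ Finset.univ.erase k, 1 / (x k - x l) + deriv w (x k) / w (x k) = 0 := by
  have hne : ∀ l ∈ Finset.univ.erase k, x k - x l ≠ 0 := by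
    intro l hl h
    exact (Finset.mem_erase.mp hl).1 (hinj (sub_eq_zero.mp h)).symm
  have hne2 : ∀ l ∈ Finset.univ.erase k, (x k - x l) ^ 2 ≠ 0 :=
    fun l hl => pow_ne_zero 2 (hne l hl)
  have h0 : logDeriv (fun t => w t * ∏ l ∈ Finset.univ.erase k, (t - x l) ^ 2) (x k) = 0 := by
    rw [logDeriv_apply, hmax.deriv_eq_zero, zero_div]
  rw [logDeriv_mul (x k) (hw_pos _).ne' (Finset.prod_ne_zero_iff.mpr hne2) (hw_diff _)
    (by fun_prop),
    logDeriv_prod (f := fun l t => (t - x l) ^ 2) hne2 (fun l _ => by fun_prop)] at h0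
  have h1 : ∑ l ∈ Finset.univ.erase k, logDeriv (fun t => (t - x l) ^ 2) (x k)
      = 2 * ∑ l ∈ Finset.univ.erase k, 1 / (x k - x l) := by
    rw [Finset.mul_sum]
    refine Finset.sum_congr rfl fun l hl => ?_
    have hd : HasDerivAt (fun t => (t - x l) ^ 2) (2 * (x k - x l)) (x k) := by
      simpa using ((hasDerivAt_id (x k)).sub_const (x l)).fun_pow 2
    rw [logDeriv_apply, hd.deriv]
    have := hne l hl
    field_simp
  rw [h1, logDeriv_apply] at h0
  linarith
end

section
/- Let w : ℝ → ℝ be positive and differentiable and let x₁,…,xₙ be distinct real numbers with fundamental Lagrange polynomials l_k(x) = ∏_{l≠k}(x − x_l)/(x_k − x_l). Suppose the system of nodes satisfies the 1(w)-normality inequality: w(x)·∑_{k=1}^n l_k(x)²/w(x_k) ≤ 1 for every x ∈ ℝ. Then every Fejér constant vanishes: C_{k,w} = 2·∑_{l≠k} 1/(x_k − x_l) + w'(x_k)/w(x_k) = 0 for k = 1,…,n. -/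
open Real Filter Set Finset

lemma hasDerivAt_prod_aux {n : ℕ} (x : Fin n → ℝ) (a : ℝ) (s : Finset (Fin n))
    (h : ∀ j ∈ s, a - x j ≠ 0) :
    (∏ j ∈ s, (a - x j) / (a - x j) = 1) ∧
    HasDerivAt (fun t => ∏ j ∈ s, (t - x j) / (a - x j)) (∑ j ∈ s, 1 / (a - x j)) a := by
  have h1 : ∀ s : Finset (Fin n), (∀ j ∈ s, a - x j ≠ 0) →
      ∏ j ∈ s, (a - x j) / (a - x j) = 1 := fun s h =>
    Finset.prod_eq_one fun j hj => div_self (h j hj)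
  refine ⟨h1 s h, ?_⟩
  induction s using Finset.induction_on with
  | empty => simpa using hasDerivAt_const a (1 : ℝ)
  | insert i s hi ih =>
    have hs : ∀ j ∈ s, a - x j ≠ 0 := fun j hj => h j (Finset.mem_insert_of_mem hj)
    have hd : HasDerivAt (fun t => (t - x i) / (a - x i)) (1 / (a - x i)) a :=
      ((hasDerivAt_id' a).sub_const (x i)).div_const _
    have := hd.fun_mul (ih hs)
    simp only [Finset.prod_insert hi, Finset.sum_insert hi]
    rw [h1 s hs, div_self (h i (Finset.mem_insert_self _ _)), mul_one, one_mul] at this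
    exact this

/-- If a system of distinct nodes satisfies the `1(w)`-normality inequality
`w(x)·∑ₖ lₖ(x)²/w(xₖ) ≤ 1` for all real `x`, where `lₖ` are the fundamental Lagrange
polynomials, then every Fejér constant vanishes:
`2·∑_{l≠k} 1/(x_k - x_l) + w'(x_k)/w(x_k) = 0` for all `k`. -/
theorem fejer_constants_vanish_of_one_w_normal
    (w : ℝ → ℝ) (hw_pos : ∀ x, 0 < w x) (hw_diff : Differentiable ℝ w)
    (n : ℕ) (x : Fin n → ℝ) (hinj : Function.Injective x)
    (l : Fin n → ℝ → ℝ)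
    (hl : ∀ k t, l k t = ∏ j ∈ Finset.univ.erase k, (t - x j) / (x k - x j))
    (hnormal : ∀ t : ℝ, w t * ∑ k, (l k t) ^ 2 / w (x k) ≤ 1) :
    ∀ k : Fin n,
      2 * ∑ j ∈ Finset.univ.erase k, 1 / (x k - x j) + deriv w (x k) / w (x k) = 0 := by
  intro k
  obtain ⟨h1, hd⟩ := hasDerivAt_prod_aux x (x k) (Finset.univ.erase k) (fun j hj =>
    sub_ne_zero.2 fun h => (Finset.ne_of_mem_erase hj) (hinj h).symm)
  have hlk : l k = fun t => ∏ j ∈ Finset.univ.erase k, (t - x j) / (x k - x j) :=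
    funext (hl k)
  rw [← hlk] at hd
  rw [← hl] at h1
  have hw0 := (hw_pos (x k)).ne'
  have hg := ((hw_diff (x k)).hasDerivAt).fun_mul ((hd.fun_pow 2).div_const (w (x k)))
  have hmax : IsLocalMax (fun t => w t * ((l k t) ^ 2 / w (x k))) (x k) := by
    refine Filter.Eventually.of_forall fun t => ?_
    have e : w (x k) * ((l k (x k)) ^ 2 / w (x k)) = 1 := by rw [h1]; field_simp
    simp only [e]
    refine le_trans (mul_le_mul_of_nonneg_left ?_ (hw_pos t).le) (hnormal t)
    exact Finset.single_le_sum (f := fun k => (l k t) ^ 2 / w (x k))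
      (fun i _ => div_nonneg (sq_nonneg _) (hw_pos _).le) (Finset.mem_univ k)
  have h0 := hmax.hasDerivAt_eq_zero hg
  rw [h1] at h0
  generalize (∑ j ∈ Finset.univ.erase k, 1 / (x k - x j)) = S at *
  rw [← h0]
  field_simp
  norm_num
  ring
end

section
/- Let w : ℝ → ℝ be positive and differentiable, let x₁,…,xₙ be distinct real numbers with fundamental Lagrange polynomials l_k(x) = ∏_{l≠k}(x − x_l)/(x_k − x_l), and suppose all Fejér constants vanish: 2·∑_{l≠k} 1/(x_k − x_l) + w'(x_k)/w(x_k) = 0 for k = 1,…,n. Then the polynomial P(x) = ∑_{k=1}^n l_k(x)²/w(x_k) (of degree at most 2n−2) is the Hermite interpolation polynomial of 1/w at the nodes: P(x_k) = 1/w(x_k) and P'(x_k) = (1/w)'(x_k) = −w'(x_k)/w(x_k)² for every k. -/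
open Real Filter Set Finset

/-- If all Fejér constants vanish, then the Grünwald kernel
`P(x) = ∑ₖ lₖ(x)²/w(xₖ)` is the Hermite interpolation polynomial of `1/w` at the nodes:
`P(xₖ) = 1/w(xₖ)` and `P'(xₖ) = (1/w)'(xₖ) = -w'(xₖ)/w(xₖ)²` for every `k`. -/
theorem grunwald_kernel_is_hermite_interpolant
    (w : ℝ → ℝ) (hw_pos : ∀ x, 0 < w x) (hw_diff : Differentiable ℝ w)
    (n : ℕ) (x : Fin n → ℝ) (hinj : Function.Injective x)
    (l : Fin n → ℝ → ℝ)
    (hl : ∀ k t, l k t = ∏ j ∈ Finset.univ.erase k, (t - x j) / (x k - x j))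
    (hfejer : ∀ k : Fin n,
      2 * ∑ j ∈ Finset.univ.erase k, 1 / (x k - x j) + deriv w (x k) / w (x k) = 0)
    (P : ℝ → ℝ) (hP : ∀ t, P t = ∑ k, (l k t) ^ 2 / w (x k)) :
    ∀ k : Fin n, P (x k) = 1 / w (x k) ∧ deriv P (x k) = -deriv w (x k) / (w (x k)) ^ 2 := by
  have l_self : ∀ k, l k (x k) = 1 := by
    intro k
    rw [hl]
    refine Finset.prod_eq_one fun j hj => div_self ?_
    exact sub_ne_zero.2 fun h => (Finset.ne_of_mem_erase hj) (hinj h).symm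
  have l_ne : ∀ k m, m ≠ k → l m (x k) = 0 := by
    intro k m hm
    rw [hl]
    exact Finset.prod_eq_zero (i := k) (by simp [hm.symm]) (by simp)
  have l_deriv : ∀ m t, HasDerivAt (l m) (∑ i ∈ Finset.univ.erase m,
      (∏ j ∈ (Finset.univ.erase m).erase i, (t - x j) / (x m - x j)) • (1 / (x m - x i))) t := by
    intro m t
    have h := HasDerivAt.fun_finset_prod (u := Finset.univ.erase m)
      (f := fun j t => (t - x j) / (x m - x j)) (f' := fun j => 1 / (x m - x j)) (x := t)
      (fun i _ => ((hasDerivAt_id t).sub_const (x i)).div_const (x m - x i))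
    exact h.congr_of_eventuallyEq (Filter.Eventually.of_forall fun t => hl m t)
  intro k
  have hk := (hw_pos (x k)).ne'
  constructor
  · rw [hP, Finset.sum_eq_single k]
    · rw [l_self]; simp
    · intro m _ hm
      rw [l_ne k m hm]; simp
    · simp
  · have h := HasDerivAt.fun_sum (u := (Finset.univ : Finset (Fin n)))
      (fun m _ => ((l_deriv m (x k)).fun_pow 2).div_const (w (x m)))
    rw [funext hP, h.deriv, Finset.sum_eq_single k]
    · rw [l_self]
      have h1 : ∀ i ∈ Finset.univ.erase k,
          (∏ j ∈ (Finset.univ.erase k).erase i, (x k - x j) / (x k - x j)) • (1 / (x k - x i))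
            = 1 / (x k - x i) := by
        intro i _
        rw [Finset.prod_eq_one, one_smul]
        intro j hj
        refine div_self (sub_ne_zero.2 fun h => ?_)
        exact Finset.ne_of_mem_erase (Finset.mem_of_mem_erase hj) (hinj h).symm
      rw [Finset.sum_congr rfl h1]
      have h2 := eq_neg_of_add_eq_zero_left (hfejer k)
      simp only [Nat.cast_ofNat, one_pow, mul_one]
      rw [h2]
      field_simp
    · intro m _ hm
      rw [l_ne k m hm]; simp
    · simp
end

section
/- Let w : ℝ → ℝ be positive and 2n-times differentiable, and suppose the 2n-th derivative of 1/w is nonnegative on all of ℝ. Let x₁,…,xₙ be distinct real numbers with fundamental Lagrange polynomials l_k(x) = ∏_{l≠k}(x − x_l)/(x_k − x_l), and suppose all Fejér constants vanish: 2·∑_{l≠k} 1/(x_k − x_l) + w'(x_k)/w(x_k) = 0 for k = 1,…,n. Then for every x ∈ ℝ: w(x)·∑_{k=1}^n l_k(x)²/w(x_k) ≤ 1. -/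
open Real Filter Set Finset

lemma aux_rolle (f : ℝ → ℝ) (hf : Continuous f) (m : ℕ) (S : Finset ℝ) (hS : S.card = m + 1)
    (hz : ∀ s ∈ S, f s = 0) :
    ∃ T : Finset ℝ, T.card = m ∧ (∀ s ∈ T, deriv f s = 0) ∧ Disjoint S T := by
  classical
  set e := S.orderEmbOfFin hS with he
  have hem : ∀ i, e i ∈ S := fun i => S.orderEmbOfFin_mem hS i
  have h1 : ∀ i : Fin m, ∃ c ∈ Set.Ioo (e i.castSucc) (e i.succ), deriv f c = 0 := by
    intro i
    apply exists_deriv_eq_zero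
    · exact e.strictMono i.castSucc_lt_succ
    · exact hf.continuousOn
    · rw [hz _ (hem _), hz _ (hem _)]
  choose c hc hc0 using h1
  have hmono : StrictMono c := by
    intro i j hij
    have : e i.succ ≤ e j.castSucc := e.monotone (by
      rw [Fin.le_def]; simpa using hij)
    linarith [(hc i).2, (hc j).1]
  refine ⟨Finset.univ.image c, ?_, ?_, ?_⟩
  · rw [Finset.card_image_of_injective _ hmono.injective]; simp
  · intro s hs
    obtain ⟨i, -, rfl⟩ := Finset.mem_image.1 hs
    exact hc0 i
  · rw [Finset.disjoint_left]
    intro s hs hs'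
    obtain ⟨i, -, rfl⟩ := Finset.mem_image.1 hs'
    have : c i ∈ Set.range e := by
      rw [he, Finset.range_orderEmbOfFin]; exact hs
    obtain ⟨j, hj⟩ := this
    have h1 := (hc i).1
    have h2 := (hc i).2
    rw [← hj, e.lt_iff_lt, Fin.lt_def] at h1 h2
    simp at h1 h2
    omega

lemma aux_rolle_iter (m : ℕ) : ∀ (f : ℝ → ℝ), ContDiff ℝ m f → ∀ (S : Finset ℝ),
    S.card = m + 1 → (∀ s ∈ S, f s = 0) → ∃ ξ, iteratedDeriv m f ξ = 0 := by
  induction m with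
  | zero =>
    intro f _ S hS hz
    obtain ⟨a, ha⟩ := Finset.card_pos.1 (by omega : 0 < S.card)
    exact ⟨a, by simpa using hz a ha⟩
  | succ m ih =>
    intro f hf S hS hz
    obtain ⟨T, hT, hTz, -⟩ := aux_rolle f hf.continuous (m + 1) S hS hz
    rw [iteratedDeriv_succ']
    refine ih (deriv f) ?_ T hT hTz
    push_cast at hf
    exact (contDiff_succ_iff_deriv.1 hf).2.2

lemma aux_poly_iter (Q : Polynomial ℝ) (m : ℕ) :
    iteratedDeriv m (fun s => Q.eval s) = fun s => (Polynomial.derivative^[m] Q).eval s := by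
  induction m generalizing Q with
  | zero => simp
  | succ m ih =>
    rw [iteratedDeriv_succ', Function.iterate_succ_apply, ← ih]
    congr 1
    ext s
    exact Q.deriv

lemma aux_poly_top (Q : Polynomial ℝ) (m : ℕ) (hQ : Q.natDegree ≤ m) (s : ℝ) :
    (Polynomial.derivative^[m] Q).eval s = (m.factorial : ℝ) * Q.coeff m := by
  have h := Polynomial.natDegree_iterate_derivative Q m
  rw [Polynomial.eq_C_of_natDegree_le_zero (by omega : (Polynomial.derivative^[m] Q).natDegree ≤ 0),
    Polynomial.eval_C, Polynomial.coeff_iterate_derivative]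
  simp [Nat.descFactorial_self]

lemma aux_hermite (n : ℕ) (hn : 0 < n) (f : ℝ → ℝ) (hf : ContDiff ℝ (2 * n : ℕ) f)
    (x : Fin n → ℝ) (hinj : Function.Injective x) (Q : Polynomial ℝ) (hQ : Q.natDegree ≤ 2 * n)
    (h0 : ∀ k, f (x k) = Q.eval (x k)) (h1 : ∀ k, deriv f (x k) = Q.derivative.eval (x k))
    (t : ℝ) (ht : ∀ k, t ≠ x k) (hft : f t = Q.eval t) :
    ∃ ξ, iteratedDeriv (2 * n) f ξ = ((2 * n).factorial : ℝ) * Q.coeff (2 * n) := by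
  classical
  have hQc : ContDiff ℝ (2 * n : ℕ) (fun s => Q.eval s) := by simpa [Polynomial.coe_aeval_eq_eval] using Q.contDiff_aeval (𝕜 := ℝ) (2 * n : ℕ)
  have hg : ContDiff ℝ (2 * n : ℕ) (fun s => f s - Q.eval s) := hf.sub hQc
  have hXt : t ∉ Finset.univ.image x := by
    simpa using fun k => (ht k).symm
  have hXc : (Finset.univ.image x).card = n := by
    rw [Finset.card_image_of_injective _ hinj]; simp
  obtain ⟨T, hT, hTz, hd⟩ := aux_rolle _ hg.continuous n (insert t (Finset.univ.image x))
    (by rw [Finset.card_insert_of_notMem hXt, hXc]) (by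
      intro s hs
      rcases Finset.mem_insert.1 hs with rfl | hs
      · simp [hft]
      · obtain ⟨k, -, rfl⟩ := Finset.mem_image.1 hs
        simp [h0])
  have hd' : Disjoint (Finset.univ.image x) T :=
    Finset.disjoint_of_subset_left (Finset.subset_insert _ _) hd
  obtain ⟨m, hm⟩ : ∃ m, 2 * n = m + 1 := ⟨2 * n - 1, by omega⟩
  have hdf : Differentiable ℝ f := hf.differentiable (by
    have : 2 * n ≠ 0 := by omega
    exact_mod_cast this)
  obtain ⟨ξ, hξ⟩ := aux_rolle_iter m (deriv (fun s => f s - Q.eval s)) (by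
      rw [hm] at hg
      push_cast at hg
      exact (contDiff_succ_iff_deriv.1 hg).2.2) (Finset.univ.image x ∪ T)
    (by rw [Finset.card_union_of_disjoint hd', hXc, hT]; omega) (by
      intro s hs
      rcases Finset.mem_union.1 hs with hs | hs
      · obtain ⟨k, -, rfl⟩ := Finset.mem_image.1 hs
        have := ((hdf (x k)).hasDerivAt.sub (Q.hasDerivAt (x k))).deriv
        rw [h1, sub_self] at this
        exact this
      · exact hTz s hs)
  refine ⟨ξ, ?_⟩
  rw [← iteratedDeriv_succ', ← hm, iteratedDeriv_fun_sub hf.contDiffAt hQc.contDiffAt,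
    aux_poly_iter] at hξ
  simp only [aux_poly_top Q _ hQ] at hξ
  linarith

/-- Let `w` be positive and `2n`-times differentiable with
`(1/w)^{(2n)} ≥ 0` on all of `ℝ`. If all Fejér constants of the distinct nodes `x₁,…,xₙ`
vanish, then the Grünwald kernel satisfies `w(x)·∑ₖ lₖ(x)²/w(xₖ) ≤ 1` for every real `x`. -/
theorem grunwald_kernel_le_one_of_fejer_constants_vanish
    (w : ℝ → ℝ) (hw_pos : ∀ x, 0 < w x)
    (n : ℕ) (hw_smooth : ContDiff ℝ (2 * n : ℕ) w)
    (hnn : ∀ x : ℝ, 0 ≤ iteratedDeriv (2 * n) (fun t => 1 / w t) x)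
    (x : Fin n → ℝ) (hinj : Function.Injective x)
    (l : Fin n → ℝ → ℝ)
    (hl : ∀ k t, l k t = ∏ j ∈ Finset.univ.erase k, (t - x j) / (x k - x j))
    (hfejer : ∀ k : Fin n,
      2 * ∑ j ∈ Finset.univ.erase k, 1 / (x k - x j) + deriv w (x k) / w (x k) = 0) :
    ∀ t : ℝ, w t * ∑ k, (l k t) ^ 2 / w (x k) ≤ 1 := by
  classical
  intro t
  rcases Nat.eq_zero_or_pos n with rfl | hn
  · simp
  have hne : ∀ {k j : Fin n}, j ∈ Finset.univ.erase k → x k - x j ≠ 0 := by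
    intro k j hj h
    exact (Finset.mem_erase.1 hj).1 (hinj (sub_eq_zero.1 h)).symm
  let L : Fin n → Polynomial ℝ := fun k =>
    ∏ j ∈ Finset.univ.erase k, (Polynomial.C (x k - x j)⁻¹ * (Polynomial.X - Polynomial.C (x j)))
  have hL : ∀ k s, (L k).eval s = l k s := by
    intro k s
    rw [hl, Polynomial.eval_prod]
    refine Finset.prod_congr rfl fun j _ => ?_
    simp; ring
  have hLd : ∀ k, (L k).natDegree < n := by
    intro k
    have : (L k).natDegree ≤ ∑ j ∈ Finset.univ.erase k, 1 := by
      refine (Polynomial.natDegree_prod_le _ _).trans (Finset.sum_le_sum fun j _ => ?_)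
      exact (Polynomial.natDegree_C_mul_le _ _).trans (Polynomial.natDegree_X_sub_C_le _)
    simp at this
    omega
  have hlk : ∀ k, l k (x k) = 1 := by
    intro k
    rw [hl]
    exact Finset.prod_eq_one fun j hj => div_self (hne hj)
  have hlj : ∀ k j, j ≠ k → l j (x k) = 0 := by
    intro k j hjk
    rw [hl]
    exact Finset.prod_eq_zero (i := k) (by simp [hjk.symm]) (by simp)
  have hLder : ∀ k, (L k).derivative.eval (x k) = ∑ j ∈ Finset.univ.erase k, 1 / (x k - x j) := by
    intro k
    rw [Polynomial.derivative_prod_finset, Polynomial.eval_finsetSum]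
    refine Finset.sum_congr rfl fun j hj => ?_
    rw [Polynomial.eval_mul, Polynomial.eval_prod, Finset.prod_eq_one]
    · simp
    · intro i hi
      have := hne (Finset.mem_of_mem_erase hi)
      simp [this]
  let P : Polynomial ℝ := ∑ k, Polynomial.C (1 / w (x k)) * (L k) ^ 2
  have hP : ∀ s, P.eval s = ∑ k, (l k s) ^ 2 / w (x k) := by
    intro s
    simp only [P, Polynomial.eval_finsetSum]
    refine Finset.sum_congr rfl fun k _ => ?_
    simp [hL]; ring
  have hPx : ∀ k, P.eval (x k) = 1 / w (x k) := by
    intro k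
    rw [hP, Finset.sum_eq_single k]
    · simp [hlk]
    · intro j _ hj
      simp [hlj k j hj]
    · simp
  have hPd : ∀ k, P.derivative.eval (x k)
      = 2 / w (x k) * ∑ j ∈ Finset.univ.erase k, 1 / (x k - x j) := by
    intro k
    simp only [P, Polynomial.derivative_sum, Polynomial.eval_finsetSum]
    rw [Finset.sum_eq_single k]
    · rw [← hLder]
      simp [Polynomial.derivative_pow, hL, hlk]; ring
    · intro j _ hj
      simp [Polynomial.derivative_pow, hL, hlj k j hj]
    · simp
  have hPdeg : P.natDegree < 2 * n := by
    have : P.natDegree ≤ 2 * n - 1 := by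
      refine Polynomial.natDegree_sum_le_of_forall_le _ _ fun k _ => ?_
      have h1 := Polynomial.natDegree_C_mul_le (1 / w (x k)) ((L k) ^ 2)
      have h2 : ((L k) ^ 2).natDegree ≤ 2 * (L k).natDegree := Polynomial.natDegree_pow_le
      have h3 := hLd k
      omega
    omega
  by_cases htx : ∃ k, t = x k
  · obtain ⟨k, rfl⟩ := htx
    rw [← hP, hPx, mul_one_div, div_self (hw_pos _).ne']
  push Not at htx
  let Ω : Polynomial ℝ := ∏ j, (Polynomial.X - Polynomial.C (x j))
  have hΩm : (Ω ^ 2).Monic := (Polynomial.monic_prod_of_monic _ _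
    fun j _ => Polynomial.monic_X_sub_C _).pow 2
  have hΩd : (Ω ^ 2).natDegree = 2 * n := by
    rw [Polynomial.natDegree_pow, Polynomial.natDegree_finsetProd_X_sub_C_eq_card]; simp
  have hΩt : Ω.eval t ≠ 0 := by
    rw [Polynomial.eval_prod, Finset.prod_ne_zero_iff]
    intro j _
    simpa [sub_eq_zero] using htx j
  have hΩx : ∀ k, Ω.eval (x k) = 0 := by
    intro k
    rw [Polynomial.eval_prod]
    exact Finset.prod_eq_zero (Finset.mem_univ k) (by simp)
  set K : ℝ := (1 / w t - P.eval t) / (Ω.eval t) ^ 2 with hK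
  obtain ⟨ξ, hξ⟩ := aux_hermite n hn (fun s => 1 / w s)
    (contDiff_const.div hw_smooth fun s => (hw_pos s).ne') x hinj
    (P + Polynomial.C K * Ω ^ 2) (by
      refine (Polynomial.natDegree_add_le _ _).trans (max_le hPdeg.le ?_)
      exact (Polynomial.natDegree_C_mul_le _ _).trans hΩd.le)
    (by intro k; simp [hPx, hΩx]) (by
      intro k
      have hdw : DifferentiableAt ℝ w (x k) := hw_smooth.differentiable (by
        have : 2 * n ≠ 0 := by omega
        exact_mod_cast this) (x k)
      have h1 : deriv (fun s => 1 / w s) (x k) = - deriv w (x k) / w (x k) ^ 2 := by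
        simp only [one_div]
        exact (hdw.hasDerivAt.inv (hw_pos _).ne').deriv
      have h2 := hfejer k
      have h3 : deriv w (x k) = -(2 * ∑ j ∈ Finset.univ.erase k, 1 / (x k - x j)) * w (x k) := by
        have := (hw_pos (x k)).ne'
        rw [← eq_neg_iff_add_eq_zero] at h2
        rw [h2]; field_simp
      have h4 := (hw_pos (x k)).ne'
      rw [h1, h3, Polynomial.derivative_add, Polynomial.eval_add, hPd]
      simp only [Polynomial.derivative_mul, Polynomial.derivative_pow, Polynomial.derivative_C,
        Polynomial.eval_mul, Polynomial.eval_add, Polynomial.eval_pow, hΩx]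
      generalize ∑ j ∈ Finset.univ.erase k, 1 / (x k - x j) = A
      simp [hΩx]
      field_simp) t htx (by
      simp only [Polynomial.eval_add, Polynomial.eval_mul, Polynomial.eval_C, Polynomial.eval_pow]
      rw [hK]; field_simp; ring)
  have hc : (P + Polynomial.C K * Ω ^ 2).coeff (2 * n) = K := by
    rw [Polynomial.coeff_add, Polynomial.coeff_eq_zero_of_natDegree_lt hPdeg,
      Polynomial.coeff_C_mul, ← hΩd, hΩm.coeff_natDegree]
    simp
  rw [hc] at hξ
  have hK0 : 0 ≤ K := by
    have h := hnn ξ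
    rw [hξ] at h
    exact nonneg_of_mul_nonneg_right h (by positivity)
  have h5 : 0 ≤ 1 / w t - P.eval t := by
    have : 1 / w t - P.eval t = K * (Ω.eval t) ^ 2 := by rw [hK]; field_simp
    rw [this]; positivity
  rw [← hP]
  have h6 := mul_nonneg (hw_pos t).le h5
  rw [mul_sub, mul_one_div, div_self (hw_pos t).ne'] at h6
  linarith
end

section
/- Let (a,b) be a real interval, w : (a,b) → ℝ positive, n ≥ 2, and let x₁ < … < xₙ be points of (a,b). Let \hat{l}₁,…,\hat{l}ₙ be nonzero real polynomials with \hat{l}_k(x_i) = δ_{ki} for all i,k, and suppose the interpolatory system is w-stable on (a,b): for every y₁,…,yₙ ≥ 0 and every x ∈ (a,b), 0 ≤ w(x)·∑_{k=1}^n \hat{l}_k(x)·y_k/w(x_k) ≤ max_k y_k. Then deg \hat{l}_k ≥ 2(n−1) for every k, and consequently ∑_{k=1}^n deg \hat{l}_k ≥ 2n(n−1). -/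
open Real Filter Set Finset

/-- If an interpolatory system of nonzero polynomials `l̂₁,…,l̂ₙ`
(`l̂ₖ(xᵢ) = δₖᵢ`) on nodes `x₁ < … < xₙ` of an interval `(a,b)` is `w`-stable, i.e.
`0 ≤ w(x)·∑ₖ l̂ₖ(x)·yₖ/w(xₖ) ≤ maxₖ yₖ` for all nonnegative `y` and `x ∈ (a,b)`,
then `deg l̂ₖ ≥ 2(n-1)` for every `k`, hence `∑ₖ deg l̂ₖ ≥ 2n(n-1)`. -/
theorem w_stable_system_degree_lower_bound
    (a b : EReal) (S : Set ℝ) (hS : S = {x : ℝ | a < (x : EReal) ∧ (x : EReal) < b})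
    (w : ℝ → ℝ) (hw_pos : ∀ x ∈ S, 0 < w x)
    (n : ℕ) (hn : 2 ≤ n)
    (x : Fin n → ℝ) (hmono : StrictMono x) (hxS : ∀ i, x i ∈ S)
    (L : Fin n → Polynomial ℝ) (hL0 : ∀ k, L k ≠ 0)
    (hinterp : ∀ k i : Fin n, (L k).eval (x i) = if k = i then 1 else 0)
    (hstable : ∀ y : Fin n → ℝ, (∀ k, 0 ≤ y k) → ∀ t ∈ S,
      0 ≤ w t * ∑ k, (L k).eval t * y k / w (x k) ∧
      w t * ∑ k, (L k).eval t * y k / w (x k) ≤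
        Finset.univ.sup' ⟨⟨0, by omega⟩, Finset.mem_univ _⟩ y) :
    (∀ k, 2 * (n - 1) ≤ (L k).natDegree) ∧
      2 * n * (n - 1) ≤ ∑ k, (L k).natDegree := by
  have hopen : IsOpen S := by
    have : S = (fun t : ℝ => (t : EReal)) ⁻¹' (Set.Ioo a b) := by
      rw [hS]; rfl
    rw [this]
    exact isOpen_Ioo.preimage continuous_coe_real_ereal
  have hnonneg : ∀ k, ∀ t ∈ S, 0 ≤ (L k).eval t := by
    intro k t ht
    have h := (hstable (fun j => if j = k then 1 else 0)
      (fun j => by split_ifs <;> norm_num) t ht).1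
    have e : ∑ j, (L j).eval t * (if j = k then (1 : ℝ) else 0) / w (x j)
        = (L k).eval t / w (x k) := by
      rw [Finset.sum_eq_single k]
      · simp
      · intro j _ hj
        simp [hj]
      · simp
    rw [e] at h
    have h1 := nonneg_of_mul_nonneg_right h (hw_pos t ht)
    have h2 := hw_pos _ (hxS k)
    have h3 := mul_nonneg h1 h2.le
    rwa [div_mul_cancel₀ _ h2.ne'] at h3
  have hdvd1 : ∀ k i, i ≠ k →
      (Polynomial.X - Polynomial.C (x i)) ^ 2 ∣ L k := by
    intro k i hik
    have hz : (L k).eval (x i) = 0 := by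
      rw [hinterp, if_neg (Ne.symm hik)]
    have hmin : IsLocalMin (fun t => (L k).eval t) (x i) := by
      filter_upwards [hopen.mem_nhds (hxS i)] with t ht
      rw [hz]
      exact hnonneg k t ht
    have hd := hmin.deriv_eq_zero
    rw [Polynomial.deriv] at hd
    have hm : 1 < (L k).rootMultiplicity (x i) :=
      (Polynomial.one_lt_rootMultiplicity_iff_isRoot (hL0 k)).2 ⟨hz, hd⟩
    exact (Polynomial.le_rootMultiplicity_iff (hL0 k)).1 hm
  have hdeg : ∀ k, 2 * (n - 1) ≤ (L k).natDegree := by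
    intro k
    have hdvd : (∏ i ∈ Finset.univ.erase k,
        (Polynomial.X - Polynomial.C (x i)) ^ 2) ∣ L k := by
      apply Finset.prod_dvd_of_coprime
      · intro i _ j _ hij
        exact (Polynomial.pairwise_coprime_X_sub_C hmono.injective hij).pow
      · intro i hi
        exact hdvd1 k i (Finset.ne_of_mem_erase hi)
    have h := Polynomial.natDegree_le_of_dvd hdvd (hL0 k)
    rw [Polynomial.natDegree_prod_of_monic _ _
      (fun i _ => (Polynomial.monic_X_sub_C (x i)).pow 2)] at h
    simp [Polynomial.natDegree_pow] at h
    omega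
  refine ⟨hdeg, ?_⟩
  calc 2 * n * (n - 1) = ∑ _k : Fin n, 2 * (n - 1) := by
        simp; ring
    _ ≤ _ := Finset.sum_le_sum (fun k _ => hdeg k)
end

section
/- Let w : ℝ → ℝ be positive and 2n-times differentiable with the 2n-th derivative of 1/w nonnegative on ℝ, and let x₁,…,xₙ be distinct real numbers whose Fejér constants all vanish: 2·∑_{l≠k} 1/(x_k − x_l) + w'(x_k)/w(x_k) = 0 for k = 1,…,n. Then the Grünwald interpolatory system (\hat{l}_k = l_k², where l_k are the fundamental Lagrange polynomials) is w-stable: for every y₁,…,yₙ ≥ 0 and every x ∈ ℝ, 0 ≤ w(x)·∑_{k=1}^n l_k(x)²·y_k/w(x_k) ≤ max_k y_k. -/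
open Real Filter Set Finset

theorem rolle_finset (F : ℝ → ℝ) (hF : Continuous F) (m : ℕ) (S : Finset ℝ)
    (hS : S.card = m + 1) (h0 : ∀ s ∈ S, F s = 0) :
    ∃ T : Finset ℝ, T.card = m ∧ Disjoint T S ∧ ∀ s ∈ T, deriv F s = 0 := by
  classical
  let e := S.orderEmbOfFin hS
  have hz : ∀ i, F (e i) = 0 := fun i => h0 _ (S.orderEmbOfFin_mem hS i)
  have key : ∀ i : Fin m, ∃ c ∈ Set.Ioo (e i.castSucc) (e i.succ), deriv F c = 0 := fun i =>
    exists_deriv_eq_zero (e.strictMono Fin.castSucc_lt_succ) hF.continuousOn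
      (by rw [hz, hz])
  choose c hc hd using key
  have hmono : StrictMono c := by
    intro i j hij
    have : e i.succ ≤ e j.castSucc := e.monotone (by
      rw [Fin.le_def]; simp; exact hij)
    exact lt_of_lt_of_le (hc i).2 (this.trans (hc j).1.le)
  refine ⟨Finset.univ.image c, ?_, ?_, ?_⟩
  · rw [Finset.card_image_of_injective _ hmono.injective]; simp
  · rw [Finset.disjoint_left]
    intro a ha hs
    obtain ⟨i, -, rfl⟩ := Finset.mem_image.1 ha
    have : c i ∈ Set.range e := by
      rw [Finset.range_orderEmbOfFin]; exact hs
    obtain ⟨j, hj⟩ := this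
    have h1 := (hc i).1
    have h2 := (hc i).2
    rw [← hj] at h1 h2
    have h1' := e.lt_iff_lt.1 h1
    have h2' := e.lt_iff_lt.1 h2
    rw [Fin.lt_def] at h1' h2'
    simp at h1' h2'
    omega
  · intro s hs
    obtain ⟨i, -, rfl⟩ := Finset.mem_image.1 hs
    exact hd i

theorem rolle_iter (N : ℕ) : ∀ (F : ℝ → ℝ), ContDiff ℝ N F → ∀ S : Finset ℝ,
    S.card = N + 1 → (∀ s ∈ S, F s = 0) → ∃ z, iteratedDeriv N F z = 0 := by
  induction N with
  | zero =>
    intro F hF S hS h0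
    obtain ⟨a, ha⟩ := Finset.card_pos.1 (by omega : 0 < S.card)
    exact ⟨a, by simpa using h0 a ha⟩
  | succ N ih =>
    intro F hF S hS h0
    obtain ⟨T, hT, -, hT0⟩ := rolle_finset F hF.continuous _ S hS h0
    have hd : ContDiff ℝ N (deriv F) := by
      have : ContDiff ℝ ((N : WithTop ℕ∞) + 1) F := by exact_mod_cast hF
      exact (contDiff_succ_iff_deriv.1 this).2.2
    obtain ⟨z, hz⟩ := ih (deriv F) hd T hT hT0
    exact ⟨z, by rw [iteratedDeriv_succ']; exact hz⟩

theorem iteratedDeriv_poly (P : Polynomial ℝ) (N : ℕ) :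
    iteratedDeriv N (fun s => P.eval s) = fun s => (Polynomial.derivative^[N] P).eval s := by
  induction N generalizing P with
  | zero => simp
  | succ N ih =>
    rw [iteratedDeriv_succ', Function.iterate_succ_apply, ← ih]
    congr 1
    ext s
    simp

theorem hermite_le (f : ℝ → ℝ) (n : ℕ) (hn : 0 < n) (hf : ContDiff ℝ (2 * n : ℕ) f)
    (hnn : ∀ s, 0 ≤ iteratedDeriv (2 * n) f s) (S : Finset ℝ) (hS : S.card = n)
    (H : Polynomial ℝ) (hH : H.natDegree < 2 * n)
    (h0 : ∀ s ∈ S, f s = H.eval s) (h1 : ∀ s ∈ S, deriv f s = H.derivative.eval s) (t : ℝ) :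
    H.eval t ≤ f t := by
  classical
  by_cases ht : t ∈ S
  · exact (h0 t ht).ge
  let M : Polynomial ℝ := ∏ a ∈ S, (Polynomial.X - Polynomial.C a)
  have hM : M.Monic := Polynomial.monic_prod_X_sub_C _ _
  have hMd : M.natDegree = n := by
    rw [← hS]; exact Polynomial.natDegree_finsetProd_X_sub_C_eq_card _ _
  have hM0 : ∀ s ∈ S, M.eval s = 0 := by
    intro s hs
    simp only [M, Polynomial.eval_prod]
    exact Finset.prod_eq_zero hs (by simp)
  have hMt : M.eval t ≠ 0 := by
    simp only [M, Polynomial.eval_prod]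
    refine Finset.prod_ne_zero_iff.2 fun a ha => ?_
    simp only [Polynomial.eval_sub, Polynomial.eval_X, Polynomial.eval_C]
    exact sub_ne_zero.2 (by rintro rfl; exact ht ha)
  have hMtp : 0 < (M.eval t) ^ 2 := by positivity
  set c := (f t - H.eval t) / (M.eval t) ^ 2 with hc
  let P : Polynomial ℝ := H + Polynomial.C c * M ^ 2
  have hPt : P.eval t = f t := by
    simp only [P, Polynomial.eval_add, Polynomial.eval_mul, Polynomial.eval_C,
      Polynomial.eval_pow, hc]
    field_simp
    ring
  let g : ℝ → ℝ := fun s => f s - P.eval s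
  have hPc : ContDiff ℝ (2 * n : ℕ) (fun s => P.eval s) := by
    simpa using P.contDiff_aeval (𝕜 := ℝ) (2 * n : ℕ)
  have hg : ContDiff ℝ (2 * n : ℕ) g := hf.sub hPc
  obtain ⟨T, hT, hTS, hT0⟩ := rolle_finset g hg.continuous n (insert t S)
    (by rw [Finset.card_insert_of_notMem ht, hS]) (by
      intro s hs
      rcases Finset.mem_insert.1 hs with rfl | hs
      · simp [g, hPt]
      · simp [g, P, h0 s hs, hM0 s hs])
  have hTS' : Disjoint T S := hTS.mono_right (Finset.subset_insert _ _)
  have hfd : Differentiable ℝ f := hf.differentiable (by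
    have : 2 * n ≠ 0 := by omega
    exact_mod_cast this)
  obtain ⟨N, hN⟩ : ∃ N, 2 * n = N + 1 := ⟨2 * n - 1, by omega⟩
  have hgd : ContDiff ℝ N (deriv g) := by
    rw [hN] at hg
    have : ContDiff ℝ ((N : WithTop ℕ∞) + 1) g := by exact_mod_cast hg
    exact (contDiff_succ_iff_deriv.1 this).2.2
  obtain ⟨z, hz⟩ := rolle_iter N (deriv g) hgd (T ∪ S)
    (by rw [Finset.card_union_of_disjoint hTS', hT, hS]; omega) (by
      intro s hs
      rcases Finset.mem_union.1 hs with hs | hs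
      · exact hT0 s hs
      · have : deriv g s = deriv f s - P.derivative.eval s :=
          ((hfd s).hasDerivAt.sub (P.hasDerivAt s)).deriv
        rw [this, h1 s hs]
        simp [P, pow_two, hM0 s hs])
  rw [← iteratedDeriv_succ', ← hN] at hz
  have hsub : iteratedDeriv (2 * n) g z
      = iteratedDeriv (2 * n) f z - iteratedDeriv (2 * n) (fun s => P.eval s) z :=
    iteratedDeriv_sub hf.contDiffAt hPc.contDiffAt
  have hMM : (M ^ 2).natDegree = 2 * n := by
    rw [hM.natDegree_pow, hMd]
  have hder : Polynomial.derivative^[2 * n] (M ^ 2)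
      = Polynomial.C ((Nat.factorial (2 * n) : ℕ) : ℝ) := by
    have hdeg : (Polynomial.derivative^[2 * n] (M ^ 2)).natDegree = 0 := by
      have := Polynomial.natDegree_iterate_derivative (M ^ 2) (2 * n)
      omega
    rw [Polynomial.eq_C_of_natDegree_eq_zero hdeg, Polynomial.coeff_iterate_derivative]
    have : (M ^ 2).coeff (0 + 2 * n) = 1 := by
      rw [zero_add, ← hMM]; exact hM.pow 2
    rw [this, zero_add, Nat.descFactorial_self]
    simp
  have hP : iteratedDeriv (2 * n) (fun s => P.eval s) z = c * (Nat.factorial (2 * n) : ℕ) := by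
    rw [iteratedDeriv_poly]
    have h3 := Polynomial.iterate_derivative_eq_zero hH
    simp only [P]
    rw [iterate_map_add, h3, Polynomial.iterate_derivative_C_mul, hder]
    simp
  have hcf : 0 ≤ c * (Nat.factorial (2 * n) : ℕ) := by
    have := hnn z
    rw [hsub, hP] at hz
    linarith
  have hc0 : 0 ≤ c := nonneg_of_mul_nonneg_left hcf (by exact_mod_cast Nat.factorial_pos _)
  have : f t - H.eval t = c * (M.eval t) ^ 2 := by rw [hc]; field_simp
  nlinarith [mul_nonneg hc0 hMtp.le]

/-- Let `w` be positive and `2n`-times differentiable with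
`(1/w)^{(2n)} ≥ 0` on `ℝ`, and let `x₁,…,xₙ` be distinct nodes with vanishing Fejér
constants. Then the Grünwald interpolatory system `l̂ₖ = lₖ²` is `w`-stable: for all
nonnegative `y₁,…,yₙ` and all real `x`,
`0 ≤ w(x)·∑ₖ lₖ(x)²·yₖ/w(xₖ) ≤ maxₖ yₖ`. -/
theorem grunwald_system_w_stable
    (w : ℝ → ℝ) (hw_pos : ∀ x, 0 < w x)
    (n : ℕ) (hn : 0 < n) (hw_smooth : ContDiff ℝ (2 * n : ℕ) w)
    (hnn : ∀ x : ℝ, 0 ≤ iteratedDeriv (2 * n) (fun t => 1 / w t) x)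
    (x : Fin n → ℝ) (hinj : Function.Injective x)
    (l : Fin n → ℝ → ℝ)
    (hl : ∀ k t, l k t = ∏ j ∈ Finset.univ.erase k, (t - x j) / (x k - x j))
    (hfejer : ∀ k : Fin n,
      2 * ∑ j ∈ Finset.univ.erase k, 1 / (x k - x j) + deriv w (x k) / w (x k) = 0) :
    ∀ y : Fin n → ℝ, (∀ k, 0 ≤ y k) → ∀ t : ℝ,
      0 ≤ w t * ∑ k, (l k t) ^ 2 * y k / w (x k) ∧
      w t * ∑ k, (l k t) ^ 2 * y k / w (x k) ≤
        Finset.univ.sup' ⟨⟨0, by omega⟩, Finset.mem_univ _⟩ y := by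
  classical
  intro y hy t
  have hsum : ∀ k, 0 ≤ (l k t) ^ 2 * y k / w (x k) := fun k =>
    div_nonneg (mul_nonneg (sq_nonneg _) (hy k)) (hw_pos _).le
  refine ⟨mul_nonneg (hw_pos t).le (Finset.sum_nonneg fun k _ => hsum k), ?_⟩
  let L : Fin n → Polynomial ℝ := fun k => Lagrange.basis Finset.univ x k
  have hinj' : Set.InjOn x (Finset.univ : Finset (Fin n)) := hinj.injOn
  have hLl : ∀ k s, (L k).eval s = l k s := by
    intro k s
    simp only [L, hl, Lagrange.basis, Lagrange.basisDivisor, Polynomial.eval_prod]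
    refine Finset.prod_congr rfl fun j _ => ?_
    simp only [Polynomial.eval_mul, Polynomial.eval_C, Polynomial.eval_sub, Polynomial.eval_X]
    ring
  have hLs : ∀ k, (L k).eval (x k) = 1 := fun k =>
    Lagrange.eval_basis_self hinj' (Finset.mem_univ k)
  have hLn : ∀ k j, k ≠ j → (L k).eval (x j) = 0 := fun k j h =>
    Lagrange.eval_basis_of_ne h (Finset.mem_univ j)
  have hLd : ∀ k, (L k).derivative.eval (x k) = ∑ j ∈ Finset.univ.erase k, 1 / (x k - x j) := by
    intro k
    simp only [L, Lagrange.basis, Polynomial.derivative_prod_finset, Polynomial.eval_finsetSum,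
      Polynomial.eval_mul, Polynomial.eval_prod]
    refine Finset.sum_congr rfl fun j _ => ?_
    rw [Finset.prod_eq_one]
    · simp [Lagrange.basisDivisor]
    · intro i hi
      have hik : i ≠ k := (Finset.mem_erase.1 (Finset.mem_erase.1 hi).2).1
      exact Lagrange.eval_basisDivisor_left_of_ne (fun h => hik (hinj h).symm)
  let H : Polynomial ℝ := ∑ k, Polynomial.C (1 / w (x k)) * (L k) ^ 2
  have hf : ContDiff ℝ (2 * n : ℕ) (fun t => 1 / w t) :=
    contDiff_const.div hw_smooth fun s => (hw_pos s).ne'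
  have hwd : Differentiable ℝ w := hw_smooth.differentiable (by
    have : 2 * n ≠ 0 := by omega
    exact_mod_cast this)
  have hH : H.natDegree < 2 * n := by
    have : H.natDegree ≤ 2 * (n - 1) := by
      refine Polynomial.natDegree_sum_le_of_forall_le _ _ fun k _ => ?_
      refine (Polynomial.natDegree_C_mul_le _ _).trans (Polynomial.natDegree_pow_le.trans ?_)
      rw [Lagrange.natDegree_basis hinj' (Finset.mem_univ k)]
      simp
    omega
  have hle := hermite_le (fun t => 1 / w t) n hn hf hnn (Finset.univ.image x)
    (by rw [Finset.card_image_of_injective _ hinj]; simp) H hH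
    (by
      intro s hs
      obtain ⟨k, -, rfl⟩ := Finset.mem_image.1 hs
      simp only [H, Polynomial.eval_finsetSum, Polynomial.eval_mul, Polynomial.eval_C,
        Polynomial.eval_pow]
      rw [Finset.sum_eq_single k]
      · simp [hLs]
      · intro j _ hj
        simp [hLn j k hj]
      · simp)
    (by
      intro s hs
      obtain ⟨k, -, rfl⟩ := Finset.mem_image.1 hs
      have hd : deriv (fun t => 1 / w t) (x k) = -deriv w (x k) / w (x k) ^ 2 := by
        simp only [one_div]
        exact ((hwd (x k)).hasDerivAt.inv (hw_pos _).ne').deriv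
      have hR : H.derivative.eval (x k)
          = 1 / w (x k) * (2 * ∑ j ∈ Finset.univ.erase k, 1 / (x k - x j)) := by
        simp only [H, Polynomial.derivative_sum, Polynomial.eval_finsetSum, pow_two,
          Polynomial.derivative_C_mul, Polynomial.derivative_mul, Polynomial.eval_mul,
          Polynomial.eval_C, Polynomial.eval_add]
        rw [Finset.sum_eq_single k]
        · simp only [hLs, hLd, Polynomial.derivative_C, Polynomial.eval_zero]; ring
        · intro j _ hj
          simp [hLn j k hj]
        · simp
      rw [hd, hR, eq_neg_of_add_eq_zero_left (hfejer k)]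
      have := (hw_pos (x k)).ne'
      field_simp) t
  have hHt : H.eval t = ∑ k, (l k t) ^ 2 / w (x k) := by
    simp only [H, Polynomial.eval_finsetSum, Polynomial.eval_mul, Polynomial.eval_C,
      Polynomial.eval_pow, hLl]
    refine Finset.sum_congr rfl fun k _ => ?_
    ring
  rw [hHt, le_div_iff₀ (hw_pos t)] at hle
  set m := Finset.univ.sup' ⟨⟨0, by omega⟩, Finset.mem_univ _⟩ y with hm
  have hym : ∀ k, y k ≤ m := fun k => Finset.le_sup' y (Finset.mem_univ k)
  have hm0 : 0 ≤ m := (hy ⟨0, hn⟩).trans (hym _)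
  have hb : ∑ k, (l k t) ^ 2 * y k / w (x k) ≤ (∑ k, (l k t) ^ 2 / w (x k)) * m := by
    rw [Finset.sum_mul]
    refine Finset.sum_le_sum fun k _ => ?_
    rw [mul_div_right_comm]
    exact mul_le_mul_of_nonneg_left (hym k) (div_nonneg (sq_nonneg _) (hw_pos _).le)
  calc w t * ∑ k, (l k t) ^ 2 * y k / w (x k)
      ≤ w t * ((∑ k, (l k t) ^ 2 / w (x k)) * m) := mul_le_mul_of_nonneg_left hb (hw_pos t).le
    _ = ((∑ k, (l k t) ^ 2 / w (x k)) * w t) * m := by ring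
    _ ≤ 1 * m := mul_le_mul_of_nonneg_right hle hm0
    _ = m := one_mul m
end

section
/- Let α, β > 0 and let w(t) = (1−t)^α·(1+t)^β be the Jacobi weight on (−1,1), with Q(t) = −α·log(1−t) − β·log(1+t), so Q'(t) = α/(1−t) − β/(1+t). Let p_n be the n-th orthonormal polynomial with respect to w on (−1,1). Then for every x ∈ (−1,1): ∫_{−1}^1 p_n(t)²·w(t)·(Q'(t) − Q'(x))/(t − x) dt = (α + β + 1 + 2n)/(1 − x²). -/
open Real Filter Set MeasureTheory

lemma jac_int1 (α β : ℝ) (hα : 0 < α) (hβ : 0 < β) (R : Polynomial ℝ) :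
    IntervalIntegrable (fun t : ℝ => R.eval t * ((1 - t) ^ (α - 1) * (1 + t) ^ β)) volume (-1) 1 := by
  have h1 : IntervalIntegrable (fun t : ℝ => (1 - t) ^ (α - 1)) volume (-1) 1 := by
    have h := (intervalIntegral.intervalIntegrable_rpow' (a := 0) (b := 2) (r := α - 1)
      (by linarith)).comp_sub_left 1
    norm_num at h
    exact h.symm
  have h2 : Continuous (fun t : ℝ => R.eval t * (1 + t) ^ β) :=
    R.continuous.mul ((continuous_const.add continuous_id).rpow_const (fun _ => Or.inr hβ.le))
  have h3 := h1.mul_continuousOn h2.continuousOn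
  refine h3.congr (fun t _ => ?_)
  ring

lemma jac_int2 (α β : ℝ) (hα : 0 < α) (hβ : 0 < β) (R : Polynomial ℝ) :
    IntervalIntegrable (fun t : ℝ => R.eval t * ((1 - t) ^ α * (1 + t) ^ (β - 1))) volume (-1) 1 := by
  have h1 : IntervalIntegrable (fun t : ℝ => (1 + t) ^ (β - 1)) volume (-1) 1 := by
    have h := (intervalIntegral.intervalIntegrable_rpow' (a := 0) (b := 2) (r := β - 1)
      (by linarith)).comp_add_left 1
    norm_num at h
    exact h
  have h2 : Continuous (fun t : ℝ => R.eval t * (1 - t) ^ α) :=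
    R.continuous.mul ((continuous_const.sub continuous_id).rpow_const (fun _ => Or.inr hα.le))
  have h3 := h1.mul_continuousOn h2.continuousOn
  refine h3.congr (fun t _ => ?_)
  ring

lemma jac_int0 (α β : ℝ) (hα : 0 < α) (hβ : 0 < β) (R : Polynomial ℝ) :
    IntervalIntegrable (fun t : ℝ => R.eval t * ((1 - t) ^ α * (1 + t) ^ β)) volume (-1) 1 := by
  have h2 : Continuous (fun t : ℝ => R.eval t * ((1 - t) ^ α * (1 + t) ^ β)) :=
    R.continuous.mul (((continuous_const.sub continuous_id).rpow_const (fun _ => Or.inr hα.le)).mul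
      ((continuous_const.add continuous_id).rpow_const (fun _ => Or.inr hβ.le)))
  exact h2.intervalIntegrable _ _

lemma jac_parts (α β : ℝ) (hα : 0 < α) (hβ : 0 < β) (R : Polynomial ℝ) :
    (∫ t in (-1:ℝ)..1, R.derivative.eval t * ((1 - t) ^ α * (1 + t) ^ β))
      - α * (∫ t in (-1:ℝ)..1, R.eval t * ((1 - t) ^ (α - 1) * (1 + t) ^ β))
      + β * (∫ t in (-1:ℝ)..1, R.eval t * ((1 - t) ^ α * (1 + t) ^ (β - 1))) = 0 := by
  have i0 := jac_int0 α β hα hβ R.derivative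
  have i1 := (jac_int1 α β hα hβ R).const_mul α
  have i2 := (jac_int2 α β hα hβ R).const_mul β
  rw [← intervalIntegral.integral_const_mul, ← intervalIntegral.integral_const_mul,
    ← intervalIntegral.integral_sub i0 i1, ← intervalIntegral.integral_add (i0.sub i1) i2]
  have hc : Continuous (fun t : ℝ => R.eval t * ((1 - t) ^ α * (1 + t) ^ β)) :=
    R.continuous.mul (((continuous_const.sub continuous_id).rpow_const (fun _ => Or.inr hα.le)).mul
      ((continuous_const.add continuous_id).rpow_const (fun _ => Or.inr hβ.le)))
  have key := intervalIntegral.integral_eq_sub_of_hasDerivAt_of_le (a := (-1:ℝ)) (b := 1)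
    (by norm_num) hc.continuousOn (fun t ht => ?_) ((i0.sub i1).add i2)
  · refine key.trans ?_
    simp [Real.zero_rpow hα.ne', Real.zero_rpow hβ.ne']
  · have ha : HasDerivAt (fun t : ℝ => (1 - t) ^ α) (-1 * α * (1 - t) ^ (α - 1)) t :=
      ((hasDerivAt_id t).const_sub 1).rpow_const (Or.inl (by have := ht.2; simp only [id]; linarith))
    have hb : HasDerivAt (fun t : ℝ => (1 + t) ^ β) (1 * β * (1 + t) ^ (β - 1)) t :=
      ((hasDerivAt_id t).const_add 1).rpow_const (Or.inl (by have := ht.1; simp only [id]; linarith))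
    refine ((R.hasDerivAt t).mul (ha.mul hb)).congr_deriv ?_
    simp only [Pi.mul_apply]
    ring

lemma jac_Ioo (f : ℝ → ℝ) : ∫ t in Set.Ioo (-1:ℝ) 1, f t = ∫ t in (-1:ℝ)..1, f t := by
  rw [intervalIntegral.integral_of_le (by norm_num), integral_Ioc_eq_integral_Ioo]

lemma jac_deg (n : ℕ) (P : Polynomial ℝ) (hdeg : P.natDegree = n) :
    (P.derivative * (Polynomial.X + 1) - Polynomial.C (n : ℝ) * P).degree < (n : WithBot ℕ) := by
  rw [Polynomial.degree_lt_iff_coeff_zero]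
  intro m hm
  have hz : P.coeff (m + 1) = 0 := Polynomial.coeff_eq_zero_of_natDegree_lt (by omega)
  rcases m with _ | k
  · have : n = 0 := by omega
    subst this
    simp [mul_add, Polynomial.coeff_derivative, hz]
  · simp only [mul_add, mul_one, Polynomial.coeff_sub, Polynomial.coeff_add,
      Polynomial.coeff_mul_X, Polynomial.coeff_C_mul, Polynomial.coeff_derivative, hz]
    rcases eq_or_lt_of_le hm with h | h
    · rw [h]; push_cast; ring
    · have : P.coeff (k + 1) = 0 := Polynomial.coeff_eq_zero_of_natDegree_lt (by omega)
      rw [this]; ring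

lemma jac_deg' (n : ℕ) (P : Polynomial ℝ) (hdeg : P.natDegree = n) :
    P.derivative.degree < (n : WithBot ℕ) := by
  rw [Polynomial.degree_lt_iff_coeff_zero]
  intro m hm
  have hz : P.coeff (m + 1) = 0 := Polynomial.coeff_eq_zero_of_natDegree_lt (by omega)
  simp [Polynomial.coeff_derivative, hz]

/-- For the Jacobi weight `w(t) = (1-t)^α·(1+t)^β` on `(-1,1)` with
`α, β > 0`, `Q'(t) = α/(1-t) - β/(1+t)`, and the `n`-th orthonormal polynomial `p_n`
with respect to `w`, one has for every `x ∈ (-1,1)`: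
`∫_{-1}^1 p_n(t)²·w(t)·(Q'(t)-Q'(x))/(t-x) dt = (α+β+1+2n)/(1-x²)`. -/
theorem jacobi_An_eq
    (α β : ℝ) (hα : 0 < α) (hβ : 0 < β) (n : ℕ) (P : Polynomial ℝ)
    (hdeg : P.natDegree = n) (hlead : 0 < P.leadingCoeff)
    (horth : ∀ q : Polynomial ℝ, q.degree < n →
      ∫ t in Set.Ioo (-1 : ℝ) 1,
        P.eval t * q.eval t * ((1 - t) ^ α * (1 + t) ^ β) = 0)
    (hnorm : ∫ t in Set.Ioo (-1 : ℝ) 1,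
      (P.eval t) ^ 2 * ((1 - t) ^ α * (1 + t) ^ β) = 1) :
    ∀ x ∈ Set.Ioo (-1 : ℝ) 1,
      ∫ t in Set.Ioo (-1 : ℝ) 1,
        (P.eval t) ^ 2 * ((1 - t) ^ α * (1 + t) ^ β) *
          (((α / (1 - t) - β / (1 + t)) - (α / (1 - x) - β / (1 + x))) / (t - x)) =
        (α + β + 1 + 2 * n) / (1 - x ^ 2) := by
  intro x hx
  have hx1 : (1 - x) ≠ 0 := by have := hx.2; linarith
  have hx2 : (1 + x) ≠ 0 := by have := hx.1; linarith
  have o1 := horth _ (jac_deg' n P hdeg)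
  have o2 := horth _ (jac_deg n P hdeg)
  rw [jac_Ioo] at o1 o2 hnorm
  -- derivative of P^2
  have e1 := jac_parts α β hα hβ (P ^ 2)
  have e2 := jac_parts α β hα hβ (P ^ 2 * (Polynomial.X + 1))
  set I := ∫ t in (-1:ℝ)..1, (P ^ 2).eval t * ((1 - t) ^ (α - 1) * (1 + t) ^ β) with hI
  set J := ∫ t in (-1:ℝ)..1, (P ^ 2).eval t * ((1 - t) ^ α * (1 + t) ^ (β - 1)) with hJ
  have a1 : (∫ t in (-1:ℝ)..1, (P ^ 2).derivative.eval t * ((1 - t) ^ α * (1 + t) ^ β)) = 0 := by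
    rw [← mul_zero (2:ℝ), ← o1, ← intervalIntegral.integral_const_mul]
    congr 1; ext t
    simp [Polynomial.derivative_pow]; ring
  have N := hnorm
  have iN := jac_int0 α β hα hβ (P ^ 2)
  have iD := jac_int0 α β hα hβ (P * (P.derivative * (Polynomial.X + 1) - Polynomial.C (n : ℝ) * P))
  have a2 : (∫ t in (-1:ℝ)..1, (P ^ 2 * (Polynomial.X + 1)).derivative.eval t *
      ((1 - t) ^ α * (1 + t) ^ β)) = 2 * n + 1 := by
    have : 2 * (∫ t in (-1:ℝ)..1, P.eval t *
        (P.derivative * (Polynomial.X + 1) - Polynomial.C (n : ℝ) * P).eval t *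
          ((1 - t) ^ α * (1 + t) ^ β)) + (2 * n + 1 : ℝ) * (∫ t in (-1:ℝ)..1,
        (P.eval t) ^ 2 * ((1 - t) ^ α * (1 + t) ^ β)) = 2 * n + 1 := by
      rw [o2, hnorm]; ring
    refine Eq.trans ?_ this
    rw [← intervalIntegral.integral_const_mul, ← intervalIntegral.integral_const_mul,
      ← intervalIntegral.integral_add]
    · congr 1; ext t
      simp [Polynomial.derivative_pow]; ring
    · simpa using iD.const_mul 2
    · simpa using iN.const_mul (2 * n + 1 : ℝ)
  have i1 := jac_int1 α β hα hβ (P ^ 2)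
  have i2 := jac_int2 α β hα hβ (P ^ 2)
  have hN' : (∫ t in (-1:ℝ)..1, (P ^ 2).eval t * ((1 - t) ^ α * (1 + t) ^ β)) = 1 := by
    simpa using hnorm
  have a3 : (∫ t in (-1:ℝ)..1, (P ^ 2 * (Polynomial.X + 1)).eval t *
      ((1 - t) ^ (α - 1) * (1 + t) ^ β)) = 2 * I - 1 := by
    have : 2 * I - (∫ t in (-1:ℝ)..1, (P ^ 2).eval t * ((1 - t) ^ α * (1 + t) ^ β)) = 2 * I - 1 := by rw [hN']
    refine Eq.trans ?_ this
    rw [hI, ← intervalIntegral.integral_const_mul,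
      ← intervalIntegral.integral_sub (i1.const_mul 2) iN, ← jac_Ioo, ← jac_Ioo]
    refine setIntegral_congr_fun measurableSet_Ioo (fun t ht => ?_)
    have h1 : 0 < 1 - t := by have := ht.2; linarith
    have : (1 - t) ^ α = (1 - t) ^ (α - 1) * (1 - t) := by
      rw [Real.rpow_sub_one h1.ne']; field_simp
    simp only [this, Polynomial.eval_mul, Polynomial.eval_add, Polynomial.eval_X,
      Polynomial.eval_one]
    ring
  have a4 : (∫ t in (-1:ℝ)..1, (P ^ 2 * (Polynomial.X + 1)).eval t *
      ((1 - t) ^ α * (1 + t) ^ (β - 1))) = 1 := by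
    refine Eq.trans ?_ hN'
    rw [← jac_Ioo, ← jac_Ioo]
    refine setIntegral_congr_fun measurableSet_Ioo (fun t ht => ?_)
    have h1 : 0 < 1 + t := by have := ht.1; linarith
    have : (1 + t) ^ β = (1 + t) ^ (β - 1) * (1 + t) := by
      rw [Real.rpow_sub_one h1.ne']; field_simp
    simp only [this, Polynomial.eval_mul, Polynomial.eval_add, Polynomial.eval_X,
      Polynomial.eval_one]
    ring
  rw [a1] at e1
  rw [a2, a3, a4] at e2
  have hmain : (∫ t in Set.Ioo (-1 : ℝ) 1,
        (P.eval t) ^ 2 * ((1 - t) ^ α * (1 + t) ^ β) *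
          (((α / (1 - t) - β / (1 + t)) - (α / (1 - x) - β / (1 + x))) / (t - x)))
      = α / (1 - x) * I + β / (1 + x) * J := by
    rw [hI, hJ, ← intervalIntegral.integral_const_mul, ← intervalIntegral.integral_const_mul,
      ← intervalIntegral.integral_add (i1.const_mul _) (i2.const_mul _), ← jac_Ioo]
    refine setIntegral_congr_ae measurableSet_Ioo ?_
    have hae : ∀ᵐ t : ℝ, t ≠ x := by simp [ae_iff]
    filter_upwards [hae] with t htx ht
    have h1 : 0 < 1 - t := by have := ht.2; linarith
    have h2 : 0 < 1 + t := by have := ht.1; linarith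
    have h3 : t - x ≠ 0 := sub_ne_zero.mpr htx
    have hq : ((α / (1 - t) - β / (1 + t)) - (α / (1 - x) - β / (1 + x))) / (t - x)
        = α / (1 - x) * (1 / (1 - t)) + β / (1 + x) * (1 / (1 + t)) := by
      have := h1.ne'
      have := h2.ne'
      field_simp
      ring
    rw [hq, Real.rpow_sub_one h1.ne', Real.rpow_sub_one h2.ne', Polynomial.eval_pow]
    ring
  rw [hmain]
  have hI' : α * I = (α + β + 1 + 2 * n) / 2 := by linarith
  have hJ' : β * J = (α + β + 1 + 2 * n) / 2 := by linarith
  have hx3 : (1 - x ^ 2) ≠ 0 := by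
    have : 1 - x ^ 2 = (1 - x) * (1 + x) := by ring
    rw [this]; exact mul_ne_zero hx1 hx2
  rw [div_mul_eq_mul_div, div_mul_eq_mul_div, hI', hJ']
  have : 1 - x ^ 2 = (1 - x) * (1 + x) := by ring
  rw [this]
  field_simp
  ring
end

section
/- Let Q(x) = ∑_{k=0}^m d_k·x^{2k} be an even real polynomial with d_k ≥ 0 for k = 1,…,m. Then for every j ≥ 0 there is a real polynomial p_j with nonnegative coefficients, all of whose nonzero monomials have exponents of the same parity as j, such that the j-th derivative of x ↦ e^{Q(x)} equals p_j(x)·e^{Q(x)} for all x ∈ ℝ. In particular, every even-order derivative of e^{Q} is nonnegative on ℝ. -/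
open Real Filter Set Finset

/-- Let `Q(x) = ∑_{k=0}^m d_k·x^{2k}` with `d_k ≥ 0` for `k = 1,…,m`.
Then for every `j` the `j`-th derivative of `e^{Q}` equals `p_j(x)·e^{Q(x)}` for a
polynomial `p_j` with nonnegative coefficients all of whose nonzero monomials have exponents
of the same parity as `j`; in particular every even-order derivative of `e^{Q}` is
nonnegative on `ℝ`. -/
theorem deriv_exp_even_poly
    (m : ℕ) (d : ℕ → ℝ) (hd : ∀ k, 1 ≤ k → k ≤ m → 0 ≤ d k)
    (Q : ℝ → ℝ) (hQ : ∀ x, Q x = ∑ k ∈ Finset.range (m + 1), d k * x ^ (2 * k)) :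
    (∀ j : ℕ, ∃ p : Polynomial ℝ,
      (∀ i, 0 ≤ p.coeff i) ∧
      (∀ i, p.coeff i ≠ 0 → i % 2 = j % 2) ∧
      (∀ x : ℝ, iteratedDeriv j (fun y => Real.exp (Q y)) x = p.eval x * Real.exp (Q x))) ∧
    (∀ j : ℕ, ∀ x : ℝ, 0 ≤ iteratedDeriv (2 * j) (fun y => Real.exp (Q y)) x) := by
  have hsucc : ∃ P : Polynomial ℝ, (∀ x, Q x = P.eval x) ∧ (∀ i, 0 ≤ P.coeff (i + 1)) ∧
      (∀ i, P.coeff i ≠ 0 → i % 2 = 0) := by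
    refine ⟨∑ k ∈ Finset.range (m + 1), Polynomial.C (d k) * Polynomial.X ^ (2 * k), ?_, ?_, ?_⟩
    · intro x
      rw [hQ, Polynomial.eval_finsetSum]
      simp
    · intro i
      rw [Polynomial.finsetSum_coeff]
      refine Finset.sum_nonneg fun k hk => ?_
      rw [Polynomial.coeff_C_mul_X_pow]
      split_ifs with h
      · exact hd k (by omega) (by have := Finset.mem_range.1 hk; omega)
      · exact le_rfl
    · intro i hi
      rw [Polynomial.finsetSum_coeff] at hi
      obtain ⟨k, _, hk⟩ := Finset.exists_ne_zero_of_sum_ne_zero hi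
      rw [Polynomial.coeff_C_mul_X_pow] at hk
      split_ifs at hk with h
      · omega
      · exact absurd rfl hk
  obtain ⟨P, hP, hP0, hP2⟩ := hsucc
  have main : ∀ j : ℕ, ∃ p : Polynomial ℝ,
      (∀ i, 0 ≤ p.coeff i) ∧
      (∀ i, p.coeff i ≠ 0 → i % 2 = j % 2) ∧
      (∀ x : ℝ, iteratedDeriv j (fun y => Real.exp (Q y)) x = p.eval x * Real.exp (Q x)) := by
    intro j
    induction j with
    | zero =>
      refine ⟨1, ?_, ?_, ?_⟩
      · intro i
        rw [Polynomial.coeff_one]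
        split_ifs <;> norm_num
      · intro i hi
        rw [Polynomial.coeff_one] at hi
        split_ifs at hi with h
        · simp [h]
        · exact absurd rfl hi
      · intro x
        simp
    | succ j ih =>
      obtain ⟨p, h0, h2, hp⟩ := ih
      refine ⟨p.derivative + p * P.derivative, ?_, ?_, ?_⟩
      · intro i
        rw [Polynomial.coeff_add, Polynomial.coeff_derivative, Polynomial.coeff_mul]
        refine add_nonneg (mul_nonneg (h0 _) (by positivity)) (Finset.sum_nonneg fun a _ => ?_)
        rw [Polynomial.coeff_derivative]
        exact mul_nonneg (h0 _) (mul_nonneg (hP0 _) (by positivity))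
      · intro i hi
        rw [Polynomial.coeff_add, Polynomial.coeff_derivative, Polynomial.coeff_mul] at hi
        by_cases h : p.coeff (i + 1) = 0
        · rw [h, zero_mul, zero_add] at hi
          obtain ⟨a, ha, hk⟩ := Finset.exists_ne_zero_of_sum_ne_zero hi
          rw [Polynomial.coeff_derivative] at hk
          have h3 := h2 _ (left_ne_zero_of_mul hk)
          have h4 := hP2 _ (left_ne_zero_of_mul (right_ne_zero_of_mul hk))
          have h5 := Finset.HasAntidiagonal.mem_antidiagonal.1 ha
          omega
        · have := h2 _ h
          omega
      · intro x
        rw [iteratedDeriv_succ, funext hp]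
        have hQ' : Q = fun x => P.eval x := funext hP
        have h1 : HasDerivAt (fun x => p.eval x * Real.exp (Q x))
            (p.derivative.eval x * Real.exp (P.eval x)
              + p.eval x * (Real.exp (P.eval x) * P.derivative.eval x)) x := by
          rw [hQ']
          exact (p.hasDerivAt x).mul (P.hasDerivAt x).exp
        rw [h1.deriv, hP x, Polynomial.eval_add, Polynomial.eval_mul]
        ring
  refine ⟨main, fun j x => ?_⟩
  obtain ⟨p, h0, h2, hp⟩ := main (2 * j)
  rw [hp, Polynomial.eval_eq_sum]
  refine mul_nonneg (Finset.sum_nonneg fun i hi => ?_) (Real.exp_pos _).le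
  have h3 := h2 i (Polynomial.mem_support_iff.1 hi)
  exact mul_nonneg (h0 i) ((Nat.even_iff.2 (by omega)).pow_nonneg x)
end

section
/- Let Q(x) = ∑_{k=0}^m d_k·x^{2k} with d_k ≥ 0 for k = 1,…,m, and w = e^{−Q} on ℝ. Let p_n be the n-th orthonormal polynomial with respect to w, with leading coefficients γ_n, ρ_n = γ_{n−1}/γ_n, and A_n(x) = ρ_n·∫_ℝ p_n(t)²·w(t)·(Q'(t) − Q'(x))/(t − x) dt, and set w_n = w·ρ_n/A_n. Then for every n ∈ ℕ the 2n-th derivative of 1/w_n, i.e. of the function x ↦ (A_n(x)/ρ_n)·e^{Q(x)}, is nonnegative on all of ℝ. -/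
open Real Filter Set Finset MeasureTheory

open Polynomial in
/-- nonnegative coefficients, exponents with parity of `e` -/
def NP (e : ℕ) (p : ℝ[X]) : Prop :=
  (∀ i, 0 ≤ p.coeff i) ∧ (∀ i, i % 2 ≠ e % 2 → p.coeff i = 0)

open Polynomial in
lemma NP.zero (e : ℕ) : NP e (0 : ℝ[X]) := ⟨by simp, by simp⟩

open Polynomial in
lemma NP.add {e : ℕ} {p q : ℝ[X]} (hp : NP e p) (hq : NP e q) : NP e (p + q) :=
  ⟨fun i => by rw [coeff_add]; exact add_nonneg (hp.1 i) (hq.1 i),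
   fun i hi => by rw [coeff_add, hp.2 i hi, hq.2 i hi, add_zero]⟩

open Polynomial in
lemma NP.sum {ι : Type*} {e : ℕ} (s : Finset ι) (f : ι → ℝ[X]) (h : ∀ i ∈ s, NP e (f i)) :
    NP e (∑ i ∈ s, f i) := by
  classical
  induction s using Finset.induction_on with
  | empty => simpa using NP.zero e
  | insert a s ha ih =>
    rw [Finset.sum_insert ha]
    exact (h a (by simp)).add (ih fun i hi => h i (by simp [hi]))

open Polynomial in
lemma NP.mul {e f : ℕ} {p q : ℝ[X]} (hp : NP e p) (hq : NP f q) : NP (e + f) (p * q) := by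
  constructor
  · intro i
    rw [coeff_mul]
    exact Finset.sum_nonneg fun x _ => mul_nonneg (hp.1 _) (hq.1 _)
  · intro i hi
    rw [coeff_mul]
    refine Finset.sum_eq_zero fun x hx => ?_
    rw [Finset.HasAntidiagonal.mem_antidiagonal] at hx
    by_cases h1 : x.1 % 2 = e % 2
    · rw [hq.2 x.2 (by omega), mul_zero]
    · rw [hp.2 x.1 h1, zero_mul]

open Polynomial in
lemma NP.congr {e f : ℕ} {p : ℝ[X]} (hp : NP e p) (h : e % 2 = f % 2) : NP f p :=
  ⟨hp.1, fun i hi => hp.2 i (by omega)⟩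

open Polynomial in
lemma NP.deriv {e : ℕ} {p : ℝ[X]} (hp : NP e p) : NP (e + 1) (derivative p) := by
  constructor
  · intro i
    rw [coeff_derivative]
    exact mul_nonneg (hp.1 _) (by positivity)
  · intro i hi
    rw [coeff_derivative, hp.2 (i+1) (by omega), zero_mul]

open Polynomial in
lemma NP.mono {e k : ℕ} {c : ℝ} (h : c ≠ 0 → k % 2 = e % 2) (hc : 0 ≤ c) :
    NP e (C c * X ^ k) := by
  constructor
  · intro i
    rw [coeff_C_mul_X_pow]; split_ifs <;> simp [hc]
  · intro i hi
    rw [coeff_C_mul_X_pow]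
    split_ifs with h1
    · by_contra h2
      exact hi (h1 ▸ h h2)
    · rfl

open Polynomial in
lemma NP.eval_nonneg {p : ℝ[X]} {e : ℕ} (hp : NP e p) (he : e % 2 = 0) (x : ℝ) :
    0 ≤ p.eval x := by
  rw [eval_eq_sum_range]
  refine Finset.sum_nonneg fun i _ => ?_
  by_cases h : i % 2 = 0
  · exact mul_nonneg (hp.1 i) (Even.pow_nonneg (Nat.even_iff.2 h) x)
  · rw [hp.2 i (by omega), zero_mul]

open Polynomial in
lemma NP.iter {q p : ℝ[X]} (hq : NP 1 (derivative q)) (hp : NP 0 p) (j : ℕ) :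
    ∃ r : ℝ[X], NP j r ∧
      iteratedDeriv j (fun y => p.eval y * Real.exp (q.eval y)) =
        fun y => r.eval y * Real.exp (q.eval y) := by
  induction j with
  | zero => exact ⟨p, hp, by simp⟩
  | succ j ih =>
    obtain ⟨r, hr, h⟩ := ih
    refine ⟨derivative r + r * derivative q, hr.deriv.add (hr.mul hq), ?_⟩
    rw [iteratedDeriv_succ, h]
    funext y
    have := (r.hasDerivAt y).mul ((q.hasDerivAt y).exp)
    refine (this.deriv).trans ?_
    simp only [eval_add, eval_mul]
    ring

open Polynomial in
lemma freud_integrable (m : ℕ) (d : ℕ → ℝ) (hd : ∀ k, 1 ≤ k → k ≤ m → 0 ≤ d k)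
    (Q : ℝ → ℝ) (hQ : ∀ x, Q x = ∑ k ∈ Finset.range (m + 1), d k * x ^ (2 * k))
    (k : ℕ) (hk1 : 1 ≤ k) (hkm : k ≤ m) (hk : 0 < d k) (p : ℝ[X]) :
    Integrable (fun t => p.eval t * Real.exp (-(Q t))) := by
  have hQc : Continuous Q := by
    have : Q = fun x => ∑ k ∈ Finset.range (m + 1), d k * x ^ (2 * k) := funext hQ
    rw [this]; fun_prop
  have hlow : ∀ t, -(Q t) ≤ (d k - d 0) + -(d k) * t ^ 2 := by
    intro t
    have h1 : d 0 + d k * t ^ (2 * k) ≤ Q t := by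
      rw [hQ, Finset.sum_range_succ']
      have : d k * t ^ (2 * k) ≤ ∑ i ∈ Finset.range m, d (i + 1) * t ^ (2 * (i + 1)) := by
        have := Finset.single_le_sum (f := fun i => d (i + 1) * t ^ (2 * (i + 1)))
          (s := Finset.range m) (fun i hi => mul_nonneg (hd _ (by omega)
            (by have := Finset.mem_range.1 hi; omega))
            (Even.pow_nonneg (even_two_mul _) t)) (a := k - 1)
            (Finset.mem_range.2 (by omega))
        simpa [Nat.sub_add_cancel hk1] using this
      simp only [mul_zero, pow_zero, mul_one]
      linarith
    have h2 : t ^ 2 - 1 ≤ t ^ (2 * k) := by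
      rw [pow_mul]
      have h0 := sq_nonneg t
      by_cases h : 1 ≤ t ^ 2
      · have := le_self_pow₀ h (by omega : k ≠ 0)
        linarith
      · have := pow_nonneg h0 k
        linarith
    nlinarith
  induction p using Polynomial.induction_on' with
  | add p q hp hq =>
    have := hp.add hq
    refine this.congr (Eventually.of_forall fun t => ?_)
    simp [add_mul]
  | monomial j a =>
    have h := integrable_rpow_mul_exp_neg_mul_sq hk (s := (j : ℝ))
      (by have : (0 : ℝ) ≤ j := j.cast_nonneg
          linarith)
    have h' := h.const_mul (a * Real.exp (d k - d 0))
    refine h'.mono (Continuous.aestronglyMeasurable (by fun_prop))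
      (Eventually.of_forall fun t => ?_)
    have := Real.exp_le_exp.2 (hlow t)
    rw [Real.exp_add] at this
    simp only [eval_monomial, Real.rpow_natCast, norm_mul, Real.norm_eq_abs, Real.abs_exp]
    calc |a| * |t ^ j| * Real.exp (-(Q t)) ≤ |a| * |t ^ j| *
          (Real.exp (d k - d 0) * Real.exp (-(d k) * t ^ 2)) := by gcongr
      _ = _ := by ring

open Polynomial in
lemma freud_parity (Q : ℝ → ℝ) (hQc : Continuous Q) (hQe : ∀ x, Q (-x) = Q x)
    (hint : ∀ p : ℝ[X], Integrable (fun t => p.eval t * Real.exp (-(Q t))))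
    (n : ℕ) (P : ℝ[X]) (hdeg : P.natDegree = n)
    (horth : ∀ q : Polynomial ℝ, q.degree < n →
      ∫ t : ℝ, P.eval t * q.eval t * Real.exp (-(Q t)) = 0) (t : ℝ) :
    P.eval (-t) ^ 2 = P.eval t ^ 2 := by
  set R : ℝ[X] := P - C ((-1) ^ n) * P.comp (-X) with hR
  have hcoef : ∀ i, (P.comp (-X)).coeff i = (-1) ^ i * P.coeff i := by
    intro i
    have h : (-X : ℝ[X]) = C (-1) * X := by simp
    rw [h, comp_C_mul_X_coeff, mul_comm]
  have hRdeg : R.degree < n := by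
    rw [degree_lt_iff_coeff_zero]
    intro i hi
    rw [hR, coeff_sub, coeff_C_mul, hcoef]
    rcases hi.eq_or_lt with rfl | h
    · rw [← mul_assoc, ← mul_pow]; simp
    · rw [coeff_eq_zero_of_natDegree_lt (by omega)]; simp
  have hRn : (R.comp (-X)).degree < n := by
    rwa [degree_comp_neg_X]
  have h1 := horth R hRdeg
  have h2 := horth _ hRn
  have h3 : ∫ t : ℝ, P.eval (-t) * R.eval t * Real.exp (-(Q t)) = 0 := by
    rw [← h2, ← integral_neg_eq_self]
    refine integral_congr_ae (Eventually.of_forall fun t => ?_)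
    simp [hQe, eval_comp]
  have h4 : ∫ t : ℝ, R.eval t ^ 2 * Real.exp (-(Q t)) = 0 := by
    have e : (fun t : ℝ => R.eval t ^ 2 * Real.exp (-(Q t))) = fun t =>
        P.eval t * R.eval t * Real.exp (-(Q t)) -
        (-1) ^ n * (P.eval (-t) * R.eval t * Real.exp (-(Q t))) := by
      funext t
      have : R.eval t = P.eval t - (-1) ^ n * P.eval (-t) := by simp [hR, eval_comp]
      rw [sq]; nth_rw 1 [this]; ring
    rw [e, integral_sub, integral_const_mul, h1, h3]
    · simp
    · simpa using hint (P * R)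
    · refine Integrable.const_mul ?_ _
      simpa [eval_comp] using hint (P.comp (-X) * R)
  have h5 : (fun t : ℝ => R.eval t ^ 2 * Real.exp (-(Q t))) = 0 := by
    have h0 := (integral_eq_zero_iff_of_nonneg (μ := volume)
      (fun t => by positivity) ((hint (R ^ 2)).congr (Eventually.of_forall fun t => by
        simp only [Polynomial.eval_pow]))).1 h4
    exact (Continuous.ae_eq_iff_eq volume (by fun_prop) continuous_const).1 h0
  have h6 : R.eval t = 0 := by
    have := congrFun h5 t
    simpa [Real.exp_ne_zero] using this
  have h7 : P.eval t = (-1) ^ n * P.eval (-t) := by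
    have : R.eval t = P.eval t - (-1) ^ n * P.eval (-t) := by simp [hR, eval_comp]
    linarith
  rw [h7, mul_pow, ← pow_mul, mul_comm n 2, pow_mul]; simp

/-- Let `Q(x) = ∑_{k=0}^m d_k·x^{2k}` with `d_k ≥ 0` for `k = 1,…,m`,
`w = e^{-Q}` on `ℝ`, `p_n` the `n`-th orthonormal polynomial with respect to `w`, and
`A_n(x)/ρ_n = ∫_ℝ p_n(t)²·w(t)·(Q'(t)-Q'(x))/(t-x) dt`. Then the `2n`-th derivative of
`1/w_n`, i.e. of `x ↦ (A_n(x)/ρ_n)·e^{Q(x)}`, is nonnegative on all of `ℝ`. -/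
theorem freud_type_recip_wn_deriv_nonneg
    (m : ℕ) (d : ℕ → ℝ) (hd : ∀ k, 1 ≤ k → k ≤ m → 0 ≤ d k)
    (Q : ℝ → ℝ) (hQ : ∀ x, Q x = ∑ k ∈ Finset.range (m + 1), d k * x ^ (2 * k))
    (n : ℕ) (P : Polynomial ℝ)
    (hdeg : P.natDegree = n) (hlead : 0 < P.leadingCoeff)
    (horth : ∀ q : Polynomial ℝ, q.degree < n →
      ∫ t : ℝ, P.eval t * q.eval t * Real.exp (-(Q t)) = 0)
    (hnorm : ∫ t : ℝ, (P.eval t) ^ 2 * Real.exp (-(Q t)) = 1)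
    (A : ℝ → ℝ)
    (hA : ∀ x : ℝ, A x =
      ∫ t : ℝ, (P.eval t) ^ 2 * Real.exp (-(Q t)) * ((deriv Q t - deriv Q x) / (t - x))) :
    ∀ x : ℝ, 0 ≤ iteratedDeriv (2 * n) (fun y => A y * Real.exp (Q y)) x := by
  set q : Polynomial ℝ := ∑ k ∈ Finset.range (m + 1), Polynomial.C (d k) * Polynomial.X ^ (2 * k) with hq
  have hQq : Q = fun x => q.eval x := by
    funext x; rw [hQ, hq, Polynomial.eval_finsetSum]; simp
  have hder : ∀ x, deriv Q x = ∑ k ∈ Finset.range (m + 1),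
      (d k * (2 * k)) * x ^ (2 * k - 1) := by
    intro x
    rw [hQq, Polynomial.deriv, hq, Polynomial.derivative_sum, Polynomial.eval_finsetSum]
    refine Finset.sum_congr rfl fun k _ => ?_
    simp [Polynomial.derivative_X_pow]
    ring
  have hq1 : NP 1 (Polynomial.derivative q) := by
    rw [hq, Polynomial.derivative_sum]
    refine NP.sum _ _ fun k hk => ?_
    rcases Nat.eq_zero_or_pos k with rfl | h0
    · simpa using NP.zero 1
    · have := Finset.mem_range.1 hk
      exact (NP.mono (e := 0) (fun _ => by omega) (hd k h0 (by omega))).deriv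
  have hAp : ∃ p : Polynomial ℝ, NP 0 p ∧ ∀ x, A x = p.eval x := by
    by_cases hex : ∃ k, 1 ≤ k ∧ k ≤ m ∧ 0 < d k
    swap
    · refine ⟨0, NP.zero 0, fun x => ?_⟩
      have hz : ∀ x, deriv Q x = 0 := by
        intro x
        rw [hder]
        refine Finset.sum_eq_zero fun k hk => ?_
        have hk := Finset.mem_range.1 hk
        rcases Nat.eq_zero_or_pos k with rfl | h0
        · simp
        · have : d k = 0 := le_antisymm
            (not_lt.1 fun h => hex ⟨k, h0, by omega, h⟩) (hd k h0 (by omega))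
          simp [this]
      rw [hA]; simp [hz]
    obtain ⟨k₀, hk1, hkm, hk⟩ := hex
    have hint := freud_integrable m d hd Q hQ k₀ hk1 hkm hk
    have hQc : Continuous Q := by rw [hQq]; exact q.continuous
    have hQe : ∀ x, Q (-x) = Q x := by
      intro x; rw [hQ, hQ]
      refine Finset.sum_congr rfl fun k _ => ?_
      rw [Even.neg_pow (even_two_mul k)]
    have hpar := freud_parity Q hQc hQe hint n P hdeg horth
    set M : ℕ → ℝ := fun j => ∫ t : ℝ, (P.eval t) ^ 2 * Real.exp (-(Q t)) * t ^ j with hM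
    have hMint : ∀ j, Integrable (fun t : ℝ => (P.eval t) ^ 2 * Real.exp (-(Q t)) * t ^ j) := by
      intro j
      refine (hint (P ^ 2 * Polynomial.X ^ j)).congr (Eventually.of_forall fun t => ?_)
      simp only [Polynomial.eval_mul, Polynomial.eval_pow, Polynomial.eval_X]
      ring
    have hModd : ∀ j, j % 2 = 1 → M j = 0 := by
      intro j hj
      have h : M j = - M j := by
        simp only [hM]
        rw [← integral_neg]
        rw [← integral_neg_eq_self]
        refine integral_congr_ae (Eventually.of_forall fun t => ?_)
        simp only [hpar, hQe, Odd.neg_pow (Nat.odd_iff.2 hj)]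
        ring
      linarith
    have hMev : ∀ j, 0 ≤ M j := by
      intro j
      by_cases hj : j % 2 = 1
      · exact (hModd j hj).ge
      · refine integral_nonneg fun t => ?_
        have := Even.pow_nonneg (Nat.even_iff.2 (by omega : j % 2 = 0)) t
        positivity
    refine ⟨∑ k ∈ Finset.range (m + 1), ∑ j ∈ Finset.range (2 * k - 1),
      Polynomial.C (d k * (2 * k) * M j) * Polynomial.X ^ (2 * k - 1 - 1 - j), ?_, ?_⟩
    · refine NP.sum _ _ fun k hk => NP.sum _ _ fun j hj => ?_
      have hk := Finset.mem_range.1 hk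
      have hj := Finset.mem_range.1 hj
      refine NP.mono (fun hne => ?_) ?_
      · have : j % 2 ≠ 1 := fun h => hne (by rw [hModd j h, mul_zero])
        omega
      · have := hd k (by omega) (by omega)
        have := hMev j
        positivity
    · intro x
      have hae : ∀ᵐ t : ℝ, (P.eval t) ^ 2 * Real.exp (-(Q t)) *
          ((deriv Q t - deriv Q x) / (t - x)) =
          ∑ k ∈ Finset.range (m + 1), ∑ j ∈ Finset.range (2 * k - 1),
            (d k * (2 * k) * x ^ (2 * k - 1 - 1 - j)) *
              ((P.eval t) ^ 2 * Real.exp (-(Q t)) * t ^ j) := by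
        have : ∀ᵐ t : ℝ, t ≠ x := Measure.ae_ne volume x
        filter_upwards [this] with t ht
        have ht' : t - x ≠ 0 := sub_ne_zero.2 ht
        have : (deriv Q t - deriv Q x) / (t - x) = ∑ k ∈ Finset.range (m + 1),
            ∑ j ∈ Finset.range (2 * k - 1),
            (d k * (2 * k) * x ^ (2 * k - 1 - 1 - j)) * t ^ j := by
          rw [div_eq_iff ht', hder, hder, ← Finset.sum_sub_distrib, Finset.sum_mul]
          refine Finset.sum_congr rfl fun k _ => ?_
          rw [← mul_sub, ← geom_sum₂_mul, ← mul_assoc, Finset.mul_sum]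
          congr 1
          refine Finset.sum_congr rfl fun j _ => ?_
          ring
        rw [this, Finset.mul_sum]
        refine Finset.sum_congr rfl fun k _ => ?_
        rw [Finset.mul_sum]
        refine Finset.sum_congr rfl fun j _ => ?_
        ring
      rw [hA, integral_congr_ae hae, integral_finsetSum _ (fun k _ =>
        integrable_finsetSum _ fun j _ => (hMint j).const_mul _), Polynomial.eval_finsetSum]
      refine Finset.sum_congr rfl fun k _ => ?_
      rw [integral_finsetSum _ (fun j _ => (hMint j).const_mul _), Polynomial.eval_finsetSum]
      refine Finset.sum_congr rfl fun j _ => ?_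
      rw [integral_const_mul]
      simp only [Polynomial.eval_mul, Polynomial.eval_C, Polynomial.eval_pow, Polynomial.eval_X, hM]
      ring
  obtain ⟨p, hp, hAe⟩ := hAp
  obtain ⟨r, hr, h⟩ := NP.iter hq1 hp (2 * n)
  intro x
  have e : (fun y => A y * Real.exp (Q y)) = fun y => p.eval y * Real.exp (q.eval y) := by
    funext y; rw [hAe, hQq]
  rw [e, h]
  exact mul_nonneg (hr.eval_nonneg (by omega) x) (Real.exp_pos _).le
end

section
/- Let Q : ℝ → ℝ be even and differentiable with Q' positive and increasing on (0,∞), and suppose that for some A ≥ 2, Q'(λs) ≥ λ^{A−1}·Q'(s) for all s > 0 and λ ≥ 1. Then for every x > 0 and every t with |t| ≤ x/2: (2/3)·((2^{A−1} − 1)/2^{A−1})·Q'(x)/x ≤ (Q'(t) − Q'(x))/(t − x) ≤ 4·Q'(x)/x. -/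
open Real Filter Set

/-- Let `Q` be even and differentiable with `Q'` positive and increasing
on `(0,∞)`, and suppose `Q'(λs) ≥ λ^{A-1}·Q'(s)` for all `s > 0`, `λ ≥ 1`, where `A ≥ 2`.
Then for every `x > 0` and `|t| ≤ x/2`:
`(2/3)·((2^{A-1}-1)/2^{A-1})·Q'(x)/x ≤ (Q'(t)-Q'(x))/(t-x) ≤ 4·Q'(x)/x`. -/
theorem divided_difference_Qprime_bounds
    (Q : ℝ → ℝ) (hQeven : ∀ x, Q (-x) = Q x) (hQdiff : Differentiable ℝ Q)
    (hQ'pos : ∀ x : ℝ, 0 < x → 0 < deriv Q x)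
    (hQ'mono : MonotoneOn (deriv Q) (Set.Ioi (0 : ℝ)))
    (A : ℝ) (hA : 2 ≤ A)
    (hgrow : ∀ s : ℝ, 0 < s → ∀ l : ℝ, 1 ≤ l →
      l ^ (A - 1) * deriv Q s ≤ deriv Q (l * s)) :
    ∀ x : ℝ, 0 < x → ∀ t : ℝ, |t| ≤ x / 2 →
      (2 / 3) * (((2 : ℝ) ^ (A - 1) - 1) / (2 : ℝ) ^ (A - 1)) * (deriv Q x / x) ≤
          (deriv Q t - deriv Q x) / (t - x) ∧
        (deriv Q t - deriv Q x) / (t - x) ≤ 4 * (deriv Q x / x) := by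
  intro x hx t ht
  have hodd : ∀ y, deriv Q (-y) = - deriv Q y := by
    intro y
    have h1 : (fun z => Q (-z)) = Q := funext hQeven
    have h2 := deriv_comp_neg Q y
    rw [h1] at h2
    linarith
  have hx2 : 0 < x / 2 := by linarith
  have hh : 0 < deriv Q (x / 2) := hQ'pos _ hx2
  have hD : 0 < deriv Q x := hQ'pos _ hx
  have hg := hgrow (x / 2) hx2 2 (by norm_num)
  rw [show 2 * (x / 2) = x by ring] at hg
  have hc : 1 ≤ (2 : ℝ) ^ (A - 1) := Real.one_le_rpow (by norm_num) (by linarith)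
  obtain ⟨ht1, ht2⟩ := abs_le.mp ht
  have hd : -deriv Q (x / 2) ≤ deriv Q t ∧ deriv Q t ≤ deriv Q (x / 2) := by
    rcases lt_trichotomy t 0 with h | h | h
    · have h0 : 0 < -t := by linarith
      have a := hQ'pos (-t) h0
      have b := hQ'mono (Set.mem_Ioi.2 h0) (Set.mem_Ioi.2 hx2) (by linarith)
      rw [hodd] at a b
      constructor <;> linarith
    · have a := hodd 0
      rw [neg_zero] at a
      subst h
      constructor <;> linarith
    · have a := hQ'pos t h
      have b := hQ'mono (Set.mem_Ioi.2 h) (Set.mem_Ioi.2 hx2) ht2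
      constructor <;> linarith
  obtain ⟨hd1, hd2⟩ := hd
  generalize deriv Q (x / 2) = h at *
  generalize deriv Q x = D at *
  generalize deriv Q t = d at *
  generalize (2 : ℝ) ^ (A - 1) = c at *
  have hhD : h ≤ D := by nlinarith
  have hxt : 0 < x - t := by linarith
  have e : (d - D) / (t - x) = (D - d) / (x - t) := by
    rw [← neg_div_neg_eq, neg_sub, neg_sub]
  rw [e]
  constructor
  · have k1 : (c - 1) / c * D ≤ D - d := by
      have k2 : h ≤ D / c := by
        rw [le_div_iff₀ (by linarith)]; linarith
      have k3 : (c - 1) / c * D = D - D / c := by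
        have : c ≠ 0 := by linarith
        field_simp
      linarith
    have k4 : 2 / 3 * ((c - 1) / c) * (D / x) = ((c - 1) / c * D) / (3 * x / 2) := by
      field_simp
    rw [k4]
    exact div_le_div₀ (by linarith) k1 hxt (by linarith)
  · have k4 : 4 * (D / x) = (2 * D) / (x / 2) := by
      field_simp; norm_num
    rw [k4]
    exact div_le_div₀ (by linarith) (by linarith) hx2 (by linarith)
end

section
/- Let w = e^{−Q} be a Freud weight on ℝ: Q is even and three times continuously differentiable, Q' > 0 on (0,∞), there exist A, B with 2 ≤ A ≤ (x·Q'(x))'/Q'(x) ≤ B for all x > 0, and there is a constant c with |x·Q'''(x)/Q''(x)| ≤ c for |x| ≥ 1. For each n, let p_n be the n-th orthonormal polynomial with respect to w, with leading coefficients γ_n and ρ_n = γ_{n−1}/γ_n, let A_n(x) = ρ_n·∫_ℝ p_n(t)²·w(t)·(Q'(t) − Q'(x))/(t − x) dt, and let a_u (for u > 0) be the Mhaskar–Rahmanov–Saff number, the unique positive solution of u = (2/π)·∫₀¹ a_u·t·Q'(a_u·t)/√(1−t²) dt. Let L₀ be a constant such that (L₀/2)·a_n > a_{2n+⌊A−1⌋+1}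 for all n. Then for every L > L₀ there exist constants c₁, c₂ > 0 depending only on L (not on n or x) such that for all n: c₁·n/a_n² ≤ A_n(x)/ρ_n ≤ c₂·n/a_n² whenever |x| ≤ L·a_n, and c₁·Q'(|x|)/|x| ≤ A_n(x)/ρ_n ≤ c₂·Q'(|x|)/|x| whenever |x| ≥ L·a_n. -/
open Real Filter Set MeasureTheory

structure Fr (f : ℝ → ℝ) (k : ℕ) : Prop where
  odd : ∀ x, f (-x) = - f x
  pos : ∀ x, 0 < x → 0 < f x
  diff : Differentiable ℝ f
  h1 : ∀ s, 0 < s → f s ≤ s * deriv f s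
  h2 : ∀ s, 0 < s → s * deriv f s ≤ k * f s
  hk : 1 ≤ k

namespace Fr

variable {f : ℝ → ℝ} {k : ℕ}

theorem zero (H : Fr f k) : f 0 = 0 := by
  have := H.odd 0
  simp at this
  linarith

theorem monoG (H : Fr f k) {s t : ℝ} (hs : 0 < s) (hst : s ≤ t) : f s / s ≤ f t / t := by
  have hm : MonotoneOn (fun x => f x / x) (Ioi 0) := by
    have hd : ∀ x ∈ Ioi (0:ℝ), HasDerivAt (fun x => f x / x) ((deriv f x * x - f x * 1) / x ^ 2) x := by
      intro x hx
      exact (H.diff x).hasDerivAt.div (hasDerivAt_id x) (ne_of_gt hx)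
    apply monotoneOn_of_deriv_nonneg (convex_Ioi 0)
    · intro x hx
      exact (hd x hx).continuousAt.continuousWithinAt
    · rw [interior_Ioi]
      intro x hx
      exact (hd x hx).differentiableAt.differentiableWithinAt
    · rw [interior_Ioi]
      intro x hx
      rw [(hd x hx).deriv]
      have := H.h1 x hx
      apply div_nonneg _ (sq_nonneg _)
      linarith
  exact hm hs (lt_of_lt_of_le hs hst) hst

theorem doubling (H : Fr f k) {s t : ℝ} (hs : 0 < s) (hst : s ≤ t) : f t / t ^ k ≤ f s / s ^ k := by
  have hm : AntitoneOn (fun x => f x / x ^ k) (Ioi 0) := by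
    have hd : ∀ x ∈ Ioi (0:ℝ), HasDerivAt (fun x => f x / x ^ k)
        ((deriv f x * x ^ k - f x * (k * x ^ (k-1))) / (x ^ k) ^ 2) x := by
      intro x hx
      exact (H.diff x).hasDerivAt.div (hasDerivAt_pow k x) (pow_ne_zero _ (ne_of_gt hx))
    apply antitoneOn_of_deriv_nonpos (convex_Ioi 0)
    · intro x hx
      exact (hd x hx).continuousAt.continuousWithinAt
    · rw [interior_Ioi]
      intro x hx
      exact (hd x hx).differentiableAt.differentiableWithinAt
    · rw [interior_Ioi]
      intro x hx
      rw [(hd x hx).deriv]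
      have := H.h2 x hx
      apply div_nonpos_of_nonpos_of_nonneg _ (sq_nonneg _)
      have e : x ^ k = x * x ^ (k-1) := by
        rw [← pow_succ', Nat.sub_add_cancel H.hk]
      have hp : 0 ≤ x ^ (k-1) := pow_nonneg (le_of_lt hx) _
      rw [e]
      nlinarith [mul_le_mul_of_nonneg_right this hp]
  exact hm hs (lt_of_lt_of_le hs hst) hst

theorem Geven (H : Fr f k) (x : ℝ) : f (-x) / (-x) = f x / x := by
  rw [H.odd, neg_div_neg_eq]

theorem Gabs (H : Fr f k) (x : ℝ) : f |x| / |x| = f x / x := by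
  rcases abs_choice x with h | h <;> rw [h]
  exact H.Geven x

theorem Gnn (H : Fr f k) (x : ℝ) : 0 ≤ f x / x := by
  rw [← H.Gabs]
  rcases (abs_nonneg x).eq_or_lt with h | h
  · rw [← h]; simp
  · exact (div_pos (H.pos _ h) h).le

theorem mulG (H : Fr f k) (x : ℝ) : x * (f x / x) = f x := by
  by_cases h : x = 0
  · simp [h, H.zero]
  · field_simp

theorem monoG' (H : Fr f k) {s t : ℝ} (hst : |s| ≤ |t|) : f s / s ≤ f t / t := by
  rcases (abs_nonneg s).eq_or_lt with h | h
  · have : s = 0 := abs_eq_zero.1 h.symm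
    rw [this, div_zero]
    exact H.Gnn t
  · rw [← H.Gabs s, ← H.Gabs t]
    exact H.monoG h hst

/-- doubling for G -/
theorem dblG (H : Fr f k) {s t K : ℝ} (hs : 0 < s) (hK : 1 ≤ K) (hst : |t| ≤ K * s) :
    f t / t ≤ K ^ k * (f s / s) := by
  have hKs : s ≤ K * s := by nlinarith
  have h0 : 0 < K * s := by nlinarith
  have e1 : f t / t ≤ f (K * s) / (K * s) := H.monoG' (by rwa [abs_of_pos h0])
  have e2 := H.doubling hs hKs
  rw [div_le_div_iff₀ (by positivity) (by positivity), mul_pow] at e2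
  have e3 : f (K * s) ≤ K ^ k * f s := by
    have : 0 < s ^ k := by positivity
    nlinarith
  refine e1.trans ?_
  rw [← mul_div_assoc]
  have := H.pos _ h0
  have := H.pos _ hs
  gcongr

theorem qlow (H : Fr f k) {x t : ℝ} (h : t ≠ x) : f x / x / 2 ≤ (f t - f x) / (t - x) := by
  wlog hx : 0 ≤ x generalizing x t
  · have := this (x := -x) (t := -t) (by simpa using h) (by linarith)
    rw [H.Geven, H.odd, H.odd] at this
    convert this using 1
    rw [← neg_div_neg_eq]; ring_nf
  have m1 := H.mulG x
  have m2 := H.mulG t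
  have n1 := H.Gnn x
  have n2 := H.Gnn t
  have mm : |x| ≤ |t| → f x / x ≤ f t / t := H.monoG'
  have mm' : |t| ≤ |x| → f t / t ≤ f x / x := H.monoG'
  rw [show f t - f x = t * (f t / t) - x * (f x / x) by rw [m1, m2]]
  clear m1 m2
  generalize f x / x = a at *
  generalize f t / t = b at *
  rw [abs_of_nonneg hx] at mm mm'
  rcases lt_or_gt_of_ne h with h | h
  · rw [← neg_div_neg_eq (t * b - x * a), le_div_iff₀ (by linarith)]
    rcases le_or_gt 0 t with h0 | h0
    · rw [abs_of_nonneg h0] at mm'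
      have := mm' h.le
      nlinarith
    · rw [abs_of_neg h0] at mm mm'
      rcases le_total x (-t) with h3 | h3
      · have := mm h3
        nlinarith
      · nlinarith
  · rw [le_div_iff₀ (by linarith)]
    rw [abs_of_pos (by linarith)] at mm
    have := mm h.le
    nlinarith

theorem qlow' (H : Fr f k) {x t : ℝ} (h : t ≠ x) : f t / t / 2 ≤ (f t - f x) / (t - x) := by
  have := H.qlow h.symm
  rwa [← neg_div_neg_eq (f x - f t), neg_sub, neg_sub] at this

theorem mvt (H : Fr f k) {x t R : ℝ} (hx : 0 ≤ x) (h : x < t) (hR : t ≤ R) :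
    (f t - f x) / (t - x) ≤ k * (f R / R) := by
  obtain ⟨ξ, hξ, e⟩ := exists_deriv_eq_slope f h H.diff.continuous.continuousOn
    (H.diff.differentiableOn)
  rw [← e]
  have hp : 0 < ξ := lt_of_le_of_lt hx hξ.1
  have := H.h2 ξ hp
  have h3 := H.monoG hp (hξ.2.le.trans hR)
  calc deriv f ξ ≤ k * (f ξ / ξ) := by
        rw [← mul_div_assoc, le_div_iff₀ hp]; linarith
    _ ≤ _ := by gcongr

theorem qup1 (H : Fr f k) {x t R : ℝ} (h : x < t) (hx : |x| ≤ R) (ht : |t| ≤ R) :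
    (f t - f x) / (t - x) ≤ k * (f R / R) := by
  have hR : 0 ≤ R := (abs_nonneg x).trans hx
  rcases le_or_gt 0 x with h0 | h0
  · exact H.mvt h0 h ((le_abs_self t).trans ht)
  rcases le_or_gt t 0 with h1 | h1
  · have := H.mvt (x := -t) (t := -x) (R := R) (by linarith) (by linarith) ((neg_le_abs x).trans hx)
    rw [H.odd, H.odd] at this
    convert this using 2 <;> ring
  · have hk : (1:ℝ) ≤ k := by exact_mod_cast H.hk
    have g1 : f x / x ≤ f R / R := H.monoG' (by rwa [abs_of_nonneg hR])
    have g2 : f t / t ≤ f R / R := H.monoG' (by rwa [abs_of_nonneg hR])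
    have n := H.Gnn R
    have m1 := H.mulG x
    have m2 := H.mulG t
    have : f R / R ≤ k * (f R / R) := by nlinarith
    refine le_trans ?_ this
    rw [div_le_iff₀ (by linarith), ← m1, ← m2]
    nlinarith

theorem qup (H : Fr f k) {x t R : ℝ} (hR : 0 < R) (hx : |x| ≤ R / 2) :
    (f t - f x) / (t - x) ≤ k * (f R / R) + 4 / R ^ 2 * (t * f t) := by
  have nn : 0 ≤ t * f t := by
    rw [← H.mulG t]
    have := H.Gnn t
    nlinarith [mul_self_nonneg t]
  have nR := H.Gnn R
  rcases le_or_gt |t| R with ht | ht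
  · have : 0 ≤ 4 / R ^ 2 * (t * f t) := by positivity
    have : (f t - f x) / (t - x) ≤ k * (f R / R) := by
      rcases lt_trichotomy t x with h | h | h
      · rw [← neg_div_neg_eq, neg_sub, neg_sub]
        exact H.qup1 h ht (by linarith)
      · rw [h]; simp; positivity
      · exact H.qup1 h (by linarith) ht
    linarith
  · have g1 : f x / x ≤ f t / t := H.monoG' (by linarith)
    have n1 := H.Gnn x
    have n2 := H.Gnn t
    have m1 := H.mulG x
    have m2 := H.mulG t
    have key : (f t - f x) / (t - x) ≤ 4 * (f t / t) := by
      have h2 : |f t - f x| ≤ |t| * (f t / t) + |x| * (f x / x) := by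
        nth_rewrite 1 [← m1, ← m2]
        refine (abs_sub _ _).trans ?_
        rw [abs_mul, abs_mul, abs_of_nonneg n1, abs_of_nonneg n2]
      have h3 : |t| - |x| ≤ |t - x| := abs_sub_abs_le_abs_sub t x
      refine (le_abs_self _).trans ?_
      have p := abs_nonneg x
      rw [abs_div, div_le_iff₀ (by linarith)]
      nlinarith
    have k2 : 4 * (f t / t) ≤ 4 / R ^ 2 * (t * f t) := by
      have : R ^ 2 ≤ t ^ 2 := by
        rw [← sq_abs t]; gcongr
      rw [div_mul_eq_mul_div, le_div_iff₀ (by positivity)]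
      nth_rewrite 2 [← m2]
      nlinarith
    have : 0 ≤ k * (f R / R) := by positivity
    linarith

theorem growth (H : Fr f k) (t : ℝ) : |f t| ≤ f 1 * (1 + t ^ 2) ^ (k + 1) := by
  have h1 := H.pos 1 one_pos
  have hs : |t| ≤ 1 + t ^ 2 := by
    rw [← sq_abs]; nlinarith [sq_nonneg (|t| - 1)]
  have h3 := H.dblG (s := 1) (t := t) (K := 1 + t ^ 2) one_pos (by nlinarith) (by linarith)
  rw [← H.mulG t, abs_mul, abs_of_nonneg (H.Gnn t), pow_succ]
  rw [div_one] at h3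
  have n := H.Gnn t
  calc |t| * (f t / t) ≤ (1 + t ^ 2) * ((1 + t ^ 2) ^ k * f 1) := by gcongr
    _ = _ := by ring

end Fr

namespace Fr

variable {f : ℝ → ℝ} {k : ℕ}

theorem fmulnn (H : Fr f k) (t : ℝ) : 0 ≤ t * f t := by
  rw [← H.mulG t]
  have := H.Gnn t
  nlinarith [mul_self_nonneg t]

theorem Qlow (H : Fr f k) {Q : ℝ → ℝ} (hQ : ∀ x, HasDerivAt Q (f x) x) (he : ∀ x, Q (-x) = Q x) :
    ∃ C b : ℝ, 0 < b ∧ ∀ t, Real.exp (-(Q t)) ≤ C * Real.exp (-b * t ^ 2) := by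
  have h1 := H.pos 1 one_pos
  have hm : MonotoneOn Q (Ici 0) := by
    apply monotoneOn_of_deriv_nonneg (convex_Ici 0)
    · exact fun x _ => (hQ x).continuousAt.continuousWithinAt
    · exact fun x _ => (hQ x).differentiableAt.differentiableWithinAt
    · rw [interior_Ici]
      intro x hx
      rw [(hQ x).deriv]
      exact (H.pos x hx).le
  have hd : ∀ x, HasDerivAt (fun t => Q t - f 1 / 2 * t ^ 2) (f x - f 1 / 2 * (2 * x)) x := by
    intro x
    have := (hQ x).sub ((hasDerivAt_pow 2 x).const_mul (f 1 / 2))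
    simp at this
    exact this
  have hm2 : MonotoneOn (fun t => Q t - f 1 / 2 * t ^ 2) (Ici 1) := by
    apply monotoneOn_of_deriv_nonneg (convex_Ici 1)
    · exact fun x _ => (hd x).continuousAt.continuousWithinAt
    · exact fun x _ => (hd x).differentiableAt.differentiableWithinAt
    · rw [interior_Ici]
      intro x hx
      have hx1 : (1:ℝ) < x := hx
      rw [(hd x).deriv]
      have := H.monoG one_pos hx1.le
      rw [div_one, le_div_iff₀ (by linarith)] at this
      linarith
  have key : ∀ t, 0 ≤ t → Q 0 - f 1 / 2 + f 1 / 2 * t ^ 2 ≤ Q t := by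
    intro t ht
    rcases le_total 1 t with h | h
    · have a1 := hm2 (by simp) (show t ∈ Ici 1 from h) h
      have a2 := hm (by simp) (show (1:ℝ) ∈ Ici 0 from by simp) zero_le_one
      simp only at a1
      linarith
    · have a2 := hm (by simp) (show t ∈ Ici 0 from ht) ht
      have : t ^ 2 ≤ 1 := by nlinarith
      nlinarith
  refine ⟨Real.exp (-(Q 0 - f 1 / 2)), f 1 / 2, by positivity, fun t => ?_⟩
  rw [← Real.exp_add, Real.exp_le_exp]
  have h3 := key |t| (abs_nonneg t)
  have h4 : Q |t| = Q t := by
    rcases abs_choice t with h | h <;> rw [h]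
    exact he t
  rw [h4, sq_abs] at h3
  linarith

theorem intP (H : Fr f k) {Q : ℝ → ℝ} (hQ : ∀ x, HasDerivAt Q (f x) x) (he : ∀ x, Q (-x) = Q x)
    (p : Polynomial ℝ) : Integrable (fun t => p.eval t * Real.exp (-(Q t))) := by
  obtain ⟨C, b, hb, hC⟩ := H.Qlow hQ he
  have hc : Continuous Q := continuous_iff_continuousAt.2 fun x => (hQ x).continuousAt
  induction p using Polynomial.induction_on' with
  | add p q hp hq =>
    simp only [Polynomial.eval_add, add_mul]
    exact hp.add hq
  | monomial n a =>
    simp only [Polynomial.eval_monomial]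
    have h := (integrable_rpow_mul_exp_neg_mul_sq hb (s := n) (by
      have : (0:ℝ) ≤ n := Nat.cast_nonneg n
      linarith)).const_mul (a * C)
    simp only [Real.rpow_natCast] at h
    refine h.mono (by fun_prop) (ae_of_all _ fun t => ?_)
    simp only [norm_mul, Real.norm_eq_abs, abs_of_pos (Real.exp_pos _)]
    have := hC t
    calc |a| * |t ^ n| * Real.exp (-(Q t)) ≤ |a| * |t ^ n| * (|C| * Real.exp (-b * t ^ 2)) := by
          gcongr
          refine this.trans ?_
          gcongr
          exact le_abs_self C
      _ = _ := by ring

theorem intPf (H : Fr f k) {Q : ℝ → ℝ} (hQ : ∀ x, HasDerivAt Q (f x) x) (he : ∀ x, Q (-x) = Q x)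
    (p : Polynomial ℝ) : Integrable (fun t => p.eval t * f t * Real.exp (-(Q t))) := by
  have hc : Continuous Q := continuous_iff_continuousAt.2 fun x => (hQ x).continuousAt
  have hf := H.diff.continuous
  have h := (H.intP hQ he (p * (Polynomial.C (f 1) * (1 + Polynomial.X ^ 2) ^ (k + 1))))
  refine h.mono (by fun_prop) (ae_of_all _ fun t => ?_)
  simp only [norm_mul, Real.norm_eq_abs, Polynomial.eval_mul, Polynomial.eval_C, Polynomial.eval_pow,
    Polynomial.eval_add, Polynomial.eval_one, Polynomial.eval_X]
  gcongr
  have := (H.growth t).trans (le_abs_self _)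
  rwa [abs_mul] at this

theorem ibp (H : Fr f k) {Q : ℝ → ℝ} (hQ : ∀ x, HasDerivAt Q (f x) x) (he : ∀ x, Q (-x) = Q x)
    (p : Polynomial ℝ) : ∫ t, p.eval t * f t * Real.exp (-(Q t))
      = ∫ t, p.derivative.eval t * Real.exp (-(Q t)) := by
  have hd : ∀ x, HasDerivAt (fun t => p.eval t * Real.exp (-(Q t)))
      (p.derivative.eval x * Real.exp (-(Q x)) - p.eval x * f x * Real.exp (-(Q x))) x := by
    intro x
    have := (p.hasDerivAt x).mul ((hQ x).neg.exp)
    exact this.congr_deriv (by simp only [Pi.neg_apply]; ring)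
  have i1 := H.intP hQ he p.derivative
  have i2 := H.intPf hQ he p
  have := integral_eq_zero_of_hasDerivAt_of_integrable hd (i1.sub i2) (H.intP hQ he p)
  rw [integral_sub i1 i2] at this
  linarith

/-- expansion: if `q` has degree at most `n`, then its inner product with `P n` is the quotient of
the leading coefficients -/
theorem proj (H : Fr f k) {Q : ℝ → ℝ} (hQ : ∀ x, HasDerivAt Q (f x) x) (he : ∀ x, Q (-x) = Q x)
    (P : ℕ → Polynomial ℝ)
    (hdeg : ∀ n, (P n).natDegree = n) (hlead : ∀ n, 0 < (P n).leadingCoeff)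
    (horth : ∀ n : ℕ, ∀ q : Polynomial ℝ, q.degree < n →
      ∫ t : ℝ, (P n).eval t * q.eval t * Real.exp (-(Q t)) = 0)
    (hnorm : ∀ n : ℕ, ∫ t : ℝ, ((P n).eval t) ^ 2 * Real.exp (-(Q t)) = 1)
    (n : ℕ) (q : Polynomial ℝ) (hq : q.natDegree ≤ n) :
    ∫ t : ℝ, (P n).eval t * q.eval t * Real.exp (-(Q t)) = q.coeff n / (P n).leadingCoeff := by
  set r := q.coeff n / (P n).leadingCoeff with hr
  have hl := (hlead n).ne'
  have hlc : (P n).coeff n = (P n).leadingCoeff := by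
    rw [Polynomial.leadingCoeff, hdeg]
  have h0 : (q - Polynomial.C r * P n).degree < n := by
    rw [Polynomial.degree_lt_iff_coeff_zero]
    intro m hm
    rw [Polynomial.coeff_sub, Polynomial.coeff_C_mul]
    rcases hm.eq_or_lt with h | h
    · rw [← h, hlc, hr]; field_simp; ring
    · rw [Polynomial.coeff_eq_zero_of_natDegree_lt (by omega),
        Polynomial.coeff_eq_zero_of_natDegree_lt (p := P n) (by rw [hdeg]; omega)]
      simp
  have h1 := horth n _ h0
  have i1 := H.intP hQ he (P n * q)
  have i2 := (H.intP hQ he (P n ^ 2)).const_mul r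
  simp only [Polynomial.eval_mul, Polynomial.eval_pow] at i1 i2
  have h2 : ∫ t : ℝ, ((P n).eval t * q.eval t * Real.exp (-(Q t))
      - r * ((P n).eval t ^ 2 * Real.exp (-(Q t)))) = 0 := by
    rw [← h1]
    congr 1
    ext t
    simp only [Polynomial.eval_sub, Polynomial.eval_mul, Polynomial.eval_C]
    ring
  rw [integral_sub i1 i2, integral_const_mul, hnorm] at h2
  linarith

theorem moment (H : Fr f k) {Q : ℝ → ℝ} (hQ : ∀ x, HasDerivAt Q (f x) x) (he : ∀ x, Q (-x) = Q x)
    (P : ℕ → Polynomial ℝ)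
    (hdeg : ∀ n, (P n).natDegree = n) (hlead : ∀ n, 0 < (P n).leadingCoeff)
    (horth : ∀ n : ℕ, ∀ q : Polynomial ℝ, q.degree < n →
      ∫ t : ℝ, (P n).eval t * q.eval t * Real.exp (-(Q t)) = 0)
    (hnorm : ∀ n : ℕ, ∫ t : ℝ, ((P n).eval t) ^ 2 * Real.exp (-(Q t)) = 1)
    (n : ℕ) :
    ∫ t : ℝ, (P n).eval t ^ 2 * Real.exp (-(Q t)) * (t * f t) = 2 * n + 1 := by
  have h := H.ibp hQ he (Polynomial.X * (P n) ^ 2)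
  have hq : (P n + 2 * (Polynomial.X * (P n).derivative)).natDegree ≤ n := by
    rw [Polynomial.natDegree_le_iff_coeff_eq_zero]
    intro m hm
    obtain ⟨m, rfl⟩ := Nat.exists_eq_succ_of_ne_zero (show m ≠ 0 by omega)
    rw [show (2 : Polynomial ℝ) = Polynomial.C 2 from rfl]
    rw [Polynomial.coeff_add, Polynomial.coeff_C_mul, Nat.succ_eq_add_one, Polynomial.coeff_X_mul,
      Polynomial.coeff_derivative,
      Polynomial.coeff_eq_zero_of_natDegree_lt (by rw [hdeg]; omega)]
    simp
  have hp := H.proj hQ he P hdeg hlead horth hnorm n _ hq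
  have hc : (P n + 2 * (Polynomial.X * (P n).derivative)).coeff n
      = (2 * n + 1) * (P n).leadingCoeff := by
    have hlc : (P n).coeff n = (P n).leadingCoeff := by
      rw [Polynomial.leadingCoeff, hdeg]
    rw [show (2 : Polynomial ℝ) = Polynomial.C 2 from rfl]
    rw [Polynomial.coeff_add, Polynomial.coeff_C_mul, hlc]
    cases n with
    | zero => simp
    | succ m =>
      rw [Polynomial.coeff_X_mul, Polynomial.coeff_derivative, hlc]
      push_cast
      ring
  rw [hc, mul_div_assoc, div_self (hlead n).ne', mul_one] at hp
  rw [← hp]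
  convert h using 2
  · ext t
    simp only [Polynomial.eval_mul, Polynomial.eval_pow, Polynomial.eval_X]
    ring
  · ext t
    simp only [Polynomial.derivative_mul, Polynomial.derivative_X, Polynomial.derivative_pow,
      Polynomial.eval_add, Polynomial.eval_mul, Polynomial.eval_pow, Polynomial.eval_X,
      Polynomial.eval_one, Polynomial.eval_C, Polynomial.eval_ofNat]
    norm_num
    ring

theorem cross (H : Fr f k) {Q : ℝ → ℝ} (hQ : ∀ x, HasDerivAt Q (f x) x) (he : ∀ x, Q (-x) = Q x)
    (P : ℕ → Polynomial ℝ)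
    (hdeg : ∀ n, (P n).natDegree = n) (hlead : ∀ n, 0 < (P n).leadingCoeff)
    (horth : ∀ n : ℕ, ∀ q : Polynomial ℝ, q.degree < n →
      ∫ t : ℝ, (P n).eval t * q.eval t * Real.exp (-(Q t)) = 0)
    (hnorm : ∀ n : ℕ, ∫ t : ℝ, ((P n).eval t) ^ 2 * Real.exp (-(Q t)) = 1)
    (m : ℕ) :
    ∫ t : ℝ, (P (m+1)).eval t * (P m).eval t * f t * Real.exp (-(Q t))
      = (m + 1) / ((P m).leadingCoeff / (P (m+1)).leadingCoeff) := by
  have h := H.ibp hQ he (P (m+1) * P m)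
  simp only [Polynomial.eval_mul] at h
  rw [h]
  have i1 := H.intP hQ he (P m * (P (m+1)).derivative)
  have i2 := H.intP hQ he (P (m+1) * (P m).derivative)
  simp only [Polynomial.eval_mul] at i1 i2
  have d1 : ((P (m+1)).derivative).natDegree ≤ m := by
    have := Polynomial.natDegree_derivative_le (P (m+1))
    rw [hdeg] at this
    exact this
  have d2 : ((P m).derivative).natDegree ≤ m := by
    have := Polynomial.natDegree_derivative_le (P m)
    rw [hdeg] at this
    omega
  have e1 := H.proj hQ he P hdeg hlead horth hnorm m _ d1
  have e2 := H.proj hQ he P hdeg hlead horth hnorm (m+1) _ (d2.trans (Nat.le_succ m))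
  rw [Polynomial.coeff_eq_zero_of_natDegree_lt (by omega), zero_div] at e2
  have hlc : (P (m+1)).coeff (m+1) = (P (m+1)).leadingCoeff := by
    rw [Polynomial.leadingCoeff, hdeg]
  rw [Polynomial.coeff_derivative, hlc] at e1
  have l1 := (hlead m).ne'
  have l2 := (hlead (m+1)).ne'
  rw [show ((m:ℝ) + 1) / ((P m).leadingCoeff / (P (m+1)).leadingCoeff)
    = (P (m+1)).leadingCoeff * (m + 1) / (P m).leadingCoeff + 0 by field_simp; ring, ← e1, ← e2,
    ← integral_add i1 i2]
  congr 1
  ext t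
  simp only [Polynomial.derivative_mul, Polynomial.eval_add, Polynomial.eval_mul]
  ring

theorem rho (H : Fr f k) {Q : ℝ → ℝ} (hQ : ∀ x, HasDerivAt Q (f x) x) (he : ∀ x, Q (-x) = Q x)
    (P : ℕ → Polynomial ℝ)
    (hdeg : ∀ n, (P n).natDegree = n) (hlead : ∀ n, 0 < (P n).leadingCoeff)
    (horth : ∀ n : ℕ, ∀ q : Polynomial ℝ, q.degree < n →
      ∫ t : ℝ, (P n).eval t * q.eval t * Real.exp (-(Q t)) = 0)
    (hnorm : ∀ n : ℕ, ∫ t : ℝ, ((P n).eval t) ^ 2 * Real.exp (-(Q t)) = 1)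
    (m : ℕ) :
    ∫ t : ℝ, (P (m+1)).eval t * (t * (P m).eval t) * Real.exp (-(Q t))
      = (P m).leadingCoeff / (P (m+1)).leadingCoeff := by
  have hd : (Polynomial.X * P m).natDegree ≤ m + 1 := by
    have := Polynomial.natDegree_mul_le (p := Polynomial.X) (q := P m)
    rw [hdeg, Polynomial.natDegree_X] at this
    omega
  have e := H.proj hQ he P hdeg hlead horth hnorm (m+1) _ hd
  rw [Polynomial.coeff_X_mul] at e
  have hlc : (P m).coeff m = (P m).leadingCoeff := by
    rw [Polynomial.leadingCoeff, hdeg]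
  rw [hlc] at e
  simpa only [Polynomial.eval_mul, Polynomial.eval_X] using e

end Fr

theorem mrs_aux (k : ℕ) : ∃ C₁ C₂ : ℝ, 0 < C₁ ∧ 0 < C₂ ∧ ∀ (f : ℝ → ℝ), Fr f k → ∀ a u : ℝ, 0 < a →
    0 < u → u = (2 / Real.pi) *
        ∫ t in Set.Ioo (0 : ℝ) 1, (a * t * f (a * t)) / Real.sqrt (1 - t ^ 2) →
    u ≤ C₁ * (a * f a) ∧ a * f a ≤ C₂ * u := by
  have hJ : IntegrableOn (fun t : ℝ => 1 / Real.sqrt (1 - t ^ 2)) (Ioo 0 1) := by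
    refine IntegrableOn.mono_set (t := Ioc 0 1) ?_ Ioo_subset_Ioc_self
    refine intervalIntegral.integrableOn_deriv_of_nonneg (g := Real.arcsin)
      Real.continuous_arcsin.continuousOn ?_ ?_
    · intro x hx
      exact Real.hasDerivAt_arcsin (by linarith [hx.1]) (by linarith [hx.2])
    · intro x _
      positivity
  have hJ0 : 0 ≤ ∫ t in Ioo (0:ℝ) 1, 1 / Real.sqrt (1 - t ^ 2) :=
    integral_nonneg fun t => by positivity
  set J := ∫ t in Ioo (0:ℝ) 1, 1 / Real.sqrt (1 - t ^ 2) with hJd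
  have hpi := Real.pi_pos
  refine ⟨2 / Real.pi * (J + 1), Real.pi / 2 * (k + 2), by positivity, by positivity, ?_⟩
  intro f H a u ha hu he
  have hfa := H.pos a ha
  have hI : IntegrableOn (fun t => (a * t * f (a * t)) / Real.sqrt (1 - t ^ 2)) (Ioo 0 1) := by
    apply Integrable.of_integral_ne_zero
    intro h
    rw [h, mul_zero] at he
    linarith
  constructor
  · have : ∫ t in Ioo (0:ℝ) 1, (a * t * f (a * t)) / Real.sqrt (1 - t ^ 2) ≤
        ∫ t in Ioo (0:ℝ) 1, (a * f a) * (1 / Real.sqrt (1 - t ^ 2)) := by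
      refine setIntegral_mono_on hI (hJ.const_mul _) measurableSet_Ioo fun t ht => ?_
      rw [mul_one_div]
      have h0 : 0 < a * t := mul_pos ha ht.1
      have h1 : a * t ≤ a := by nlinarith [ht.2]
      have h2 := H.monoG h0 h1
      rw [div_le_div_iff₀ h0 ha] at h2
      have h3 := H.pos _ h0
      have h4 : f (a * t) ≤ f a := by
        have : f (a * t) * a ≤ f a * a := h2.trans (by gcongr)
        exact le_of_mul_le_mul_right this ha
      gcongr
    rw [integral_const_mul] at this
    rw [he]
    calc _ ≤ 2 / Real.pi * (a * f a * J) := by gcongr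
      _ ≤ 2 / Real.pi * (a * f a * (J + 1)) := by gcongr; linarith
      _ = _ := by ring
  · have hp : IntegrableOn (fun t : ℝ => a * f a * t ^ (k+1)) (Ioo 0 1) :=
      ((by fun_prop : Continuous fun t : ℝ => a * f a * t ^ (k+1)).integrableOn_Icc).mono_set
        Ioo_subset_Icc_self
    have h1 : ∫ t in Ioo (0:ℝ) 1, a * f a * t ^ (k+1) ≤
        ∫ t in Ioo (0:ℝ) 1, (a * t * f (a * t)) / Real.sqrt (1 - t ^ 2) := by
      refine setIntegral_mono_on hp hI measurableSet_Ioo fun t ht => ?_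
      have h0 : 0 < a * t := mul_pos ha ht.1
      have h1 : a * t ≤ a := by nlinarith [ht.2]
      have h2 := H.doubling h0 h1
      rw [div_le_div_iff₀ (by positivity) (by positivity), mul_pow] at h2
      have h3 := H.pos _ h0
      have hak : 0 < a ^ k := by positivity
      have h4 : f a * t ^ k ≤ f (a * t) := by nlinarith
      have hs : Real.sqrt (1 - t ^ 2) ≤ 1 := by
        exact Real.sqrt_le_one.2 (by nlinarith [sq_nonneg t])
      have hs0 : 0 < Real.sqrt (1 - t ^ 2) := Real.sqrt_pos.2 (by nlinarith [ht.1, ht.2])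
      rw [le_div_iff₀ hs0]
      have ht0 := ht.1
      calc a * f a * t ^ (k+1) * Real.sqrt (1 - t ^ 2) ≤ a * f a * t ^ (k+1) * 1 := by gcongr
        _ = a * t * (f a * t ^ k) := by ring
        _ ≤ _ := by gcongr
    rw [integral_const_mul, ← integral_Ioc_eq_integral_Ioo,
      ← intervalIntegral.integral_of_le zero_le_one, integral_pow] at h1
    simp only [one_pow] at h1
    push_cast at h1
    have e : ∫ t in Ioo (0:ℝ) 1, (a * t * f (a * t)) / Real.sqrt (1 - t ^ 2) = Real.pi / 2 * u := by
      rw [he]; field_simp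
    rw [e] at h1
    rw [zero_pow (by omega), sub_zero, mul_one_div, div_le_iff₀ (by positivity)] at h1
    calc a * f a ≤ _ := h1
      _ = _ := by ring

namespace Fr

variable {f : ℝ → ℝ} {k : ℕ}

theorem intG (H : Fr f k) {Q : ℝ → ℝ} (hQ : ∀ x, HasDerivAt Q (f x) x) (he : ∀ x, Q (-x) = Q x)
    (p : Polynomial ℝ) : Integrable (fun t => p.eval t ^ 2 * Real.exp (-(Q t)) * (f t / t)) := by
  have hc : Continuous Q := continuous_iff_continuousAt.2 fun x => (hQ x).continuousAt
  have hf := H.diff.continuous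
  have i1 := (H.intP hQ he (p ^ 2)).mul_const (f 1)
  have i2 := H.intPf hQ he (Polynomial.X * p ^ 2)
  simp only [Polynomial.eval_mul, Polynomial.eval_pow, Polynomial.eval_X] at i1 i2
  have hm : Measurable fun t => f t / t := hf.measurable.div measurable_id
  refine (i1.add i2).mono' ?_ (ae_of_all _ fun t => ?_)
  · exact ((by fun_prop : Continuous fun t => p.eval t ^ 2 * Real.exp (-(Q t))).measurable.mul
      hm).aestronglyMeasurable
  · have n := H.Gnn t
    have hW := Real.exp_pos (-(Q t))
    rw [Real.norm_eq_abs, abs_of_nonneg (by positivity)]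
    have key : f t / t ≤ f 1 + t * f t := by
      rcases le_total |t| 1 with h | h
      · have := H.monoG' (s := t) (t := 1) (by simpa using h)
        rw [div_one] at this
        linarith [H.fmulnn t]
      · rw [← H.mulG t]
        have h1 := H.pos 1 one_pos
        have : 1 ≤ t * t := by
          rw [← abs_mul_abs_self]; nlinarith
        have e : t * (f t / t) / t = f t / t := by rw [H.mulG]
        rw [e]
        nlinarith
    calc _ ≤ p.eval t ^ 2 * Real.exp (-(Q t)) * (f 1 + t * f t) := by gcongr
      _ = _ := by simp only [Pi.add_apply]; ring

theorem lowerX (H : Fr f k) {Q : ℝ → ℝ} (hQ : ∀ x, HasDerivAt Q (f x) x) (he : ∀ x, Q (-x) = Q x)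
    (P : ℕ → Polynomial ℝ)
    (hdeg : ∀ n, (P n).natDegree = n) (hlead : ∀ n, 0 < (P n).leadingCoeff)
    (horth : ∀ n : ℕ, ∀ q : Polynomial ℝ, q.degree < n →
      ∫ t : ℝ, (P n).eval t * q.eval t * Real.exp (-(Q t)) = 0)
    (hnorm : ∀ n : ℕ, ∫ t : ℝ, ((P n).eval t) ^ 2 * Real.exp (-(Q t)) = 1)
    (m : ℕ) (r : ℝ) (hr : r = (P m).leadingCoeff / (P (m+1)).leadingCoeff) :
    (m + 1) / (2 * r ^ 2) ≤ ∫ t, (P (m+1)).eval t ^ 2 * Real.exp (-(Q t)) * (f t / t) := by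
  have hr0 : 0 < r := hr ▸ div_pos (hlead _) (hlead _)
  have e1 := H.cross hQ he P hdeg hlead horth hnorm m
  have e2 := H.moment hQ he P hdeg hlead horth hnorm m
  rw [← hr] at e1
  have i1 := (H.intG hQ he (P (m+1))).const_mul r
  have i2 := H.intPf hQ he (Polynomial.X * (P m) ^ 2)
  have i3 := H.intPf hQ he (P (m+1) * P m)
  simp only [Polynomial.eval_mul, Polynomial.eval_pow, Polynomial.eval_X] at i2 i3
  have i2' : Integrable fun t => 1 / (4 * r) * ((P m).eval t ^ 2 * Real.exp (-(Q t)) * (t * f t)) := by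
    refine (i2.const_mul (1 / (4 * r))).congr (ae_of_all _ fun t => ?_)
    simp only
    ring
  have key := integral_mono i3 (i1.add i2') (fun t => by
    simp only [Pi.add_apply]
    have m1 := H.mulG t
    have n := H.Gnn t
    have hW := Real.exp_pos (-(Q t))
    have e : t * f t = t * (t * (f t / t)) := by rw [m1]
    rw [e, show (P (m+1)).eval t * (P m).eval t * f t
      = (P (m+1)).eval t * (P m).eval t * (t * (f t / t)) by rw [m1]]
    generalize f t / t = g at *
    generalize (P (m+1)).eval t = u
    generalize (P m).eval t = v
    generalize Real.exp (-(Q t)) = w at *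
    have : 0 ≤ w * g * ((2 * r * u - t * v) ^ 2 / (4 * r)) := by positivity
    have e : w * g * ((2 * r * u - t * v) ^ 2 / (4 * r)) =
      r * (u ^ 2 * w * g) + 1 / (4 * r) * (v ^ 2 * w * (t * (t * g))) - u * v * (t * g) * w := by
      field_simp; ring
    linarith)
  rw [e1] at key
  simp only [Pi.add_apply] at key
  rw [integral_add i1 i2', integral_const_mul, integral_const_mul, e2] at key
  set X := ∫ t, (P (m+1)).eval t ^ 2 * Real.exp (-(Q t)) * (f t / t)
  rw [div_le_iff₀ (by positivity)]
  have h : r * ((m + 1) / r) ≤ r * (r * X + 1 / (4 * r) * (2 * m + 1)) := by gcongr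
  have e3 : r * (((m:ℝ) + 1) / r) = m + 1 := by field_simp
  have e4 : r * (r * X + 1 / (4 * r) * (2 * m + 1)) = r ^ 2 * X + (2 * m + 1) / 4 := by field_simp
  rw [e3, e4] at h
  linarith

theorem rho_le (H : Fr f k) {Q : ℝ → ℝ} (hQ : ∀ x, HasDerivAt Q (f x) x) (he : ∀ x, Q (-x) = Q x)
    (P : ℕ → Polynomial ℝ)
    (hdeg : ∀ n, (P n).natDegree = n) (hlead : ∀ n, 0 < (P n).leadingCoeff)
    (horth : ∀ n : ℕ, ∀ q : Polynomial ℝ, q.degree < n →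
      ∫ t : ℝ, (P n).eval t * q.eval t * Real.exp (-(Q t)) = 0)
    (hnorm : ∀ n : ℕ, ∫ t : ℝ, ((P n).eval t) ^ 2 * Real.exp (-(Q t)) = 1)
    (m : ℕ) (r : ℝ) (hr : r = (P m).leadingCoeff / (P (m+1)).leadingCoeff) (a : ℝ) (ha : 0 < a) :
    r ^ 2 ≤ a ^ 2 + (2 * (m + 1) + 1) / (f a / a) := by
  have hr0 : 0 < r := hr ▸ div_pos (hlead _) (hlead _)
  have hg : 0 < f a / a := div_pos (H.pos a ha) ha
  have e1 := H.rho hQ he P hdeg hlead horth hnorm m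
  have e2 := H.moment hQ he P hdeg hlead horth hnorm (m+1)
  rw [← hr] at e1
  have i0 := (H.intP hQ he ((P (m+1)) ^ 2)).const_mul (a ^ 2 / (2 * r))
  have i1 := (H.intP hQ he ((P m) ^ 2)).const_mul (r / 2)
  have i2 := H.intPf hQ he (Polynomial.X * (P (m+1)) ^ 2)
  have i3 := H.intP hQ he (P (m+1) * (Polynomial.X * P m))
  simp only [Polynomial.eval_mul, Polynomial.eval_pow, Polynomial.eval_X] at i0 i1 i2 i3
  have i2' : Integrable fun t => 1 / (2 * r * (f a / a)) *
      ((P (m+1)).eval t ^ 2 * Real.exp (-(Q t)) * (t * f t)) := by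
    refine (i2.const_mul (1 / (2 * r * (f a / a)))).congr (ae_of_all _ fun t => ?_)
    simp only
    ring
  have key := integral_mono i3 ((i0.add i1).add i2') (fun t => by
    simp only [Pi.add_apply]
    have n := H.fmulnn t
    have hW := Real.exp_pos (-(Q t))
    have hb : t ^ 2 ≤ a ^ 2 + (t * f t) / (f a / a) := by
      rcases le_total |t| a with h | h
      · have : t ^ 2 ≤ a ^ 2 := by rw [← sq_abs]; gcongr
        have : 0 ≤ (t * f t) / (f a / a) := by positivity
        linarith
      · have h2 : f a / a ≤ f t / t := H.monoG' (by rwa [abs_of_pos ha])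
        have : t ^ 2 ≤ (t * f t) / (f a / a) := by
          rw [le_div_iff₀ hg]
          have e : t * f t = t * (t * (f t / t)) := by rw [H.mulG]
          rw [e]
          nlinarith [sq_nonneg t]
        nlinarith [sq_nonneg a]
    generalize f a / a = g at *
    generalize (P (m+1)).eval t = u
    generalize (P m).eval t = v
    generalize Real.exp (-(Q t)) = w at *
    generalize t * f t = z at *
    have h1 : 0 ≤ w * ((u * t - r * v) ^ 2 / (2 * r)) := by positivity
    have h2 : w * u ^ 2 / (2 * r) * t ^ 2 ≤ w * u ^ 2 / (2 * r) * (a ^ 2 + z / g) := by gcongr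
    have e : w * ((u * t - r * v) ^ 2 / (2 * r)) =
      w * u ^ 2 / (2 * r) * t ^ 2 + r / 2 * (v ^ 2 * w) - u * (t * v) * w := by
      field_simp; ring
    have e' : w * u ^ 2 / (2 * r) * (a ^ 2 + z / g) = a ^ 2 / (2 * r) * (u ^ 2 * w)
      + 1 / (2 * r * g) * (u ^ 2 * w * z) := by
      field_simp
    linarith)
  rw [e1] at key
  rw [integral_add' (i0.add i1) i2', integral_add' i0 i1, integral_const_mul, integral_const_mul,
    integral_const_mul, e2, hnorm, hnorm] at key
  push_cast at key
  have h : r * r ≤ r * (a ^ 2 / (2 * r) * 1 + r / 2 * 1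
    + 1 / (2 * r * (f a / a)) * (2 * (m + 1) + 1)) := by gcongr
  generalize f a / a = g at *
  have e4 : r * (a ^ 2 / (2 * r) * 1 + r / 2 * 1 + 1 / (2 * r * g) * (2 * (m + 1) + 1))
    = (a ^ 2 + (2 * (m + 1) + 1) / g) / 2 + r ^ 2 / 2 := by field_simp; ring
  rw [e4] at h
  nlinarith

end Fr

/-- For a Freud weight `w = e^{-Q}` (with `2 ≤ A ≤ (xQ'(x))'/Q'(x) ≤ B`
and `|xQ'''(x)/Q''(x)| ≤ c` for `|x| ≥ 1`), with `p_n` the orthonormal polynomials,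
`A_n(x)/ρ_n = ∫ p_n(t)²·w(t)·(Q'(t)-Q'(x))/(t-x) dt`, `a_u` the Mhaskar–Rahmanov–Saff
numbers and `L₀` with `(L₀/2)·a_n > a_{2n+⌊A-1⌋+1}`, for every `L > L₀` there are constants
`c₁, c₂ > 0` (depending only on `L`) such that `A_n(x)/ρ_n ≍ n/a_n²` for `|x| ≤ L·a_n` and
`A_n(x)/ρ_n ≍ Q'(|x|)/|x|` for `|x| ≥ L·a_n`. -/
theorem An_asymptotics
    (Q : ℝ → ℝ) (hQeven : ∀ x, Q (-x) = Q x) (hQsmooth : ContDiff ℝ 3 Q)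
    (hQ'pos : ∀ x : ℝ, 0 < x → 0 < deriv Q x)
    (A B : ℝ) (hA : 2 ≤ A)
    (hAB : ∀ x : ℝ, 0 < x →
      A ≤ deriv (fun y => y * deriv Q y) x / deriv Q x ∧
      deriv (fun y => y * deriv Q y) x / deriv Q x ≤ B)
    (c : ℝ) (hc : ∀ x : ℝ, 1 ≤ |x| →
      |x * iteratedDeriv 3 Q x / iteratedDeriv 2 Q x| ≤ c)
    (P : ℕ → Polynomial ℝ)
    (hdeg : ∀ n, (P n).natDegree = n) (hlead : ∀ n, 0 < (P n).leadingCoeff)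
    (horth : ∀ n : ℕ, ∀ q : Polynomial ℝ, q.degree < n →
      ∫ t : ℝ, (P n).eval t * q.eval t * Real.exp (-(Q t)) = 0)
    (hnorm : ∀ n : ℕ, ∫ t : ℝ, ((P n).eval t) ^ 2 * Real.exp (-(Q t)) = 1)
    (An : ℕ → ℝ → ℝ)
    (hAn : ∀ n : ℕ, ∀ x : ℝ, An n x =
      ∫ t : ℝ, ((P n).eval t) ^ 2 * Real.exp (-(Q t)) * ((deriv Q t - deriv Q x) / (t - x)))
    (a : ℝ → ℝ)
    (hMRS : ∀ u : ℝ, 0 < u → 0 < a u ∧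
      u = (2 / Real.pi) *
        ∫ t in Set.Ioo (0 : ℝ) 1, (a u * t * deriv Q (a u * t)) / Real.sqrt (1 - t ^ 2))
    (L₀ : ℝ)
    (hL₀ : ∀ n : ℕ, 0 < n → a ((2 * n + ⌊A - 1⌋₊ + 1 : ℕ) : ℝ) < (L₀ / 2) * a n) :
    ∀ L : ℝ, L₀ < L → ∃ c₁ c₂ : ℝ, 0 < c₁ ∧ 0 < c₂ ∧
      ∀ n : ℕ, 0 < n → ∀ x : ℝ,
        (|x| ≤ L * a n →
          c₁ * ((n : ℝ) / (a n) ^ 2) ≤ An n x ∧ An n x ≤ c₂ * ((n : ℝ) / (a n) ^ 2)) ∧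
        (L * a n ≤ |x| →
          c₁ * (deriv Q |x| / |x|) ≤ An n x ∧ An n x ≤ c₂ * (deriv Q |x| / |x|)) := by
  set f := deriv Q with hf
  have hf2 : ContDiff ℝ 2 f := by
    have h : ContDiff ℝ (2 + 1) Q := by
      have e : (2 + 1 : WithTop ℕ∞) = 3 := by norm_num
      rw [e]; exact hQsmooth
    exact (contDiff_succ_iff_deriv.1 h).2.2
  have hQ : ∀ x, HasDerivAt Q (f x) x := fun x =>
    ((hQsmooth.differentiable (by norm_num)) x).hasDerivAt
  have hfd : Differentiable ℝ f := hf2.differentiable (by norm_num)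
  have hd : ∀ x, deriv (fun y => y * f y) x = f x + x * deriv f x := by
    intro x
    have := (hasDerivAt_id x).mul (hfd x).hasDerivAt
    have h2 : HasDerivAt (fun y => y * f y) (1 * f x + x * deriv f x) x := this
    rw [h2.deriv, one_mul]
  obtain ⟨k, hk⟩ := exists_nat_ge B
  have H : Fr f (k + 1) := by
    refine ⟨?_, hQ'pos, hfd, ?_, ?_, by omega⟩
    · intro x
      have h1 : HasDerivAt (fun y => Q (-y)) (f (-x) * (-1)) x :=
        (hQ (-x)).comp x (hasDerivAt_neg x)
      have h2 : (fun y => Q (-y)) = Q := funext hQeven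
      rw [h2] at h1
      have := h1.unique (hQ x)
      linarith
    · intro s hs
      have h := (hAB s hs).1
      rw [hd, le_div_iff₀ (hQ'pos s hs)] at h
      have := hQ'pos s hs
      nlinarith
    · intro s hs
      have h := (hAB s hs).2
      rw [hd, div_le_iff₀ (hQ'pos s hs)] at h
      have := hQ'pos s hs
      push_cast
      nlinarith
  have he := hQeven
  generalize k + 1 = k at H
  have hcQ : Continuous Q := hQsmooth.continuous
  have hcf : Continuous f := hfd.continuous
  obtain ⟨C₁, C₂, hC₁, hC₂, hC⟩ := mrs_aux k
  intro L hL
  have hL0 : 0 < L := by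
    have h1 := hL₀ 1 one_pos
    have h2 := (hMRS ((2 * 1 + ⌊A - 1⌋₊ + 1 : ℕ) : ℝ) (by positivity)).1
    have h3 := (hMRS ((1 : ℕ) : ℝ) (by norm_num)).1
    have : 0 < L₀ := by
      by_contra hcon
      push Not at hcon
      have := mul_nonpos_of_nonpos_of_nonneg (show L₀ / 2 ≤ 0 by linarith) h3.le
      linarith
    linarith
  set K := 2 * max L 1 with hK
  set K' := 2 * max 1 (1 / L) with hK'
  have hK1 : 1 ≤ K := by have := le_max_right L 1; linarith
  have hK1' : 1 ≤ K' := by have := le_max_left 1 (1 / L); linarith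
  refine ⟨min (1 / 2) (1 / (4 * (1 + 3 * C₁))),
    max ((k + 3 * C₁) * K ^ k * C₂) ((k + 3 * C₁) * K' ^ k), by positivity, by positivity, ?_⟩
  intro n hn x
  have hn1 : (1:ℝ) ≤ n := by exact_mod_cast hn
  obtain ⟨ha, hau⟩ := hMRS n (by exact_mod_cast hn)
  obtain ⟨b1, b2⟩ := hC f H (a n) n ha (by linarith) hau
  generalize a n = α at *
  have hfα := H.pos α ha
  have hGα : 0 < f α / α := div_pos hfα ha
  have eα : α * f α = α ^ 2 * (f α / α) := by field_simp
  rw [eα] at b1 b2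
  -- integrability
  have i0 : Integrable fun t => (P n).eval t ^ 2 * Real.exp (-(Q t)) := by
    have := H.intP hQ he ((P n) ^ 2)
    simp only [Polynomial.eval_pow] at this
    exact this
  have i1 : Integrable fun t => (P n).eval t ^ 2 * Real.exp (-(Q t)) * (t * f t) := by
    refine (H.intPf hQ he (Polynomial.X * (P n) ^ 2)).congr (ae_of_all _ fun t => ?_)
    simp only [Polynomial.eval_mul, Polynomial.eval_pow, Polynomial.eval_X]
    ring
  have hmom := H.moment hQ he P hdeg hlead horth hnorm n
  have upb : ∀ R, 0 < R → |x| ≤ R / 2 → ∀ t, (P n).eval t ^ 2 * Real.exp (-(Q t)) *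
      ((f t - f x) / (t - x)) ≤ (k * (f R / R)) * ((P n).eval t ^ 2 * Real.exp (-(Q t)))
      + 4 / R ^ 2 * ((P n).eval t ^ 2 * Real.exp (-(Q t)) * (t * f t)) := by
    intro R hR hx t
    have := H.qup (t := t) hR hx
    have hW := Real.exp_pos (-(Q t))
    calc _ ≤ (P n).eval t ^ 2 * Real.exp (-(Q t)) * (k * (f R / R) + 4 / R ^ 2 * (t * f t)) := by
          gcongr
      _ = _ := by ring
  have iq : Integrable fun t => (P n).eval t ^ 2 * Real.exp (-(Q t)) * ((f t - f x) / (t - x)) := by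
    refine ((i0.const_mul (k * (f (2 * |x| + 1) / (2 * |x| + 1)))).add
      (i1.const_mul (4 / (2 * |x| + 1) ^ 2))).mono' ?_ (ae_of_all _ fun t => ?_)
    · have hm : Measurable fun t => (f t - f x) / (t - x) :=
        (hcf.measurable.sub_const _).div (measurable_id.sub_const _)
      exact ((by fun_prop : Continuous fun t => (P n).eval t ^ 2 * Real.exp (-(Q t))).measurable.mul
        hm).aestronglyMeasurable
    · have nn : 0 ≤ (f t - f x) / (t - x) := by
        by_cases h : t = x
        · simp [h]
        · have := H.qlow h
          have := H.Gnn x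
          linarith
      have hW := Real.exp_pos (-(Q t))
      rw [Real.norm_eq_abs, abs_of_nonneg (by positivity)]
      exact upb (2 * |x| + 1) (by positivity) (by linarith) t
  have hne : ∀ᵐ t : ℝ, t ≠ x := by
    simp [ae_iff]
  -- upper bound
  have up : ∀ R, 0 < R → 2 * |x| ≤ R → 2 * α ≤ R → An n x ≤ (k + 3 * C₁) * (f R / R) := by
    intro R hR hx hα
    have h := integral_mono iq ((i0.const_mul (k * (f R / R))).add (i1.const_mul (4 / R ^ 2)))
      (upb R hR (by linarith))
    rw [integral_add' (i0.const_mul _) (i1.const_mul _), integral_const_mul, integral_const_mul,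
      hmom, hnorm] at h
    rw [hAn]
    refine h.trans ?_
    have g1 : f α / α ≤ f R / R := H.monoG ha (by linarith)
    have : 4 / R ^ 2 * (2 * n + 1) ≤ 3 * C₁ * (f R / R) := by
      rw [div_mul_eq_mul_div, div_le_iff₀ (by positivity)]
      have h4 : 4 * α ^ 2 ≤ R ^ 2 := by nlinarith
      have hGR := H.Gnn R
      calc 4 * (2 * (n:ℝ) + 1) ≤ 12 * n := by linarith
        _ ≤ 12 * (C₁ * (α ^ 2 * (f α / α))) := by linarith
        _ = 3 * C₁ * (f α / α) * (4 * α ^ 2) := by ring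
        _ ≤ 3 * C₁ * (f R / R) * R ^ 2 := by gcongr
    linarith
  have hα2 : 0 < α ^ 2 := by positivity
  constructor
  · intro hx
    constructor
    · have h1 : ∫ t, (P n).eval t ^ 2 * Real.exp (-(Q t)) * (f t / t) * (1 / 2) ≤ An n x := by
        rw [hAn]
        refine integral_mono_ae ((H.intG hQ he (P n)).mul_const _) iq ?_
        filter_upwards [hne] with t ht
        have := H.qlow' ht
        have hW := Real.exp_pos (-(Q t))
        calc _ = (P n).eval t ^ 2 * Real.exp (-(Q t)) * (f t / t / 2) := by ring
          _ ≤ _ := by gcongr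
      rw [integral_mul_const] at h1
      obtain ⟨m, rfl⟩ := Nat.exists_eq_succ_of_ne_zero hn.ne'
      have h2 := H.lowerX hQ he P hdeg hlead horth hnorm m _ rfl
      have h3 := H.rho_le hQ he P hdeg hlead horth hnorm m _ rfl α ha
      have hr0 : 0 < (P m).leadingCoeff / (P (m+1)).leadingCoeff := div_pos (hlead _) (hlead _)
      generalize (P m).leadingCoeff / (P (m+1)).leadingCoeff = r at *
      simp only [Nat.succ_eq_add_one, Nat.cast_add, Nat.cast_one] at *
      have h4 : (2 * ((m:ℝ) + 1) + 1) / (f α / α) ≤ 3 * C₁ * α ^ 2 := by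
        rw [div_le_iff₀ hGα]
        linarith
      have h5 : r ^ 2 ≤ (1 + 3 * C₁) * α ^ 2 := by linarith
      have h6 : ((m:ℝ) + 1) / (2 * ((1 + 3 * C₁) * α ^ 2)) ≤ (m + 1) / (2 * r ^ 2) := by gcongr
      calc _ ≤ 1 / (4 * (1 + 3 * C₁)) * (((m:ℝ) + 1) / α ^ 2) := by
            gcongr
            exact min_le_right _ _
        _ = ((m:ℝ) + 1) / (2 * ((1 + 3 * C₁) * α ^ 2)) * (1 / 2) := by field_simp; norm_num
        _ ≤ _ := by linarith
    · have hm1 := le_max_left L 1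
      have hm2 := le_max_right L 1
      have h1 := up (K * α) (by positivity) (by nlinarith) (by nlinarith)
      have h2 := H.dblG (t := K * α) ha hK1 (by rw [abs_of_pos (by positivity)])
      have h3 : f α / α ≤ C₂ * (n / α ^ 2) := by
        rw [← mul_div_assoc, le_div_iff₀ hα2]
        linarith
      calc An n x ≤ (k + 3 * C₁) * (f (K * α) / (K * α)) := h1
        _ ≤ (k + 3 * C₁) * (K ^ k * (C₂ * (n / α ^ 2))) := by
          gcongr
          refine h2.trans ?_
          gcongr
        _ = ((k + 3 * C₁) * K ^ k * C₂) * (n / α ^ 2) := by ring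
        _ ≤ _ := by
          gcongr
          exact le_max_left _ _
  · intro hx
    have hx0 : 0 < |x| := lt_of_lt_of_le (by positivity) hx
    have hGx := H.Gnn |x|
    constructor
    · have h1 : ∫ t, (P n).eval t ^ 2 * Real.exp (-(Q t)) * (f |x| / |x| / 2) ≤ An n x := by
        rw [hAn]
        refine integral_mono_ae (i0.mul_const _) iq ?_
        filter_upwards [hne] with t ht
        have := H.qlow ht
        rw [← H.Gabs] at this
        have hW := Real.exp_pos (-(Q t))
        gcongr
      rw [integral_mul_const, hnorm] at h1
      calc _ ≤ 1 / 2 * (f |x| / |x|) := by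
            gcongr
            exact min_le_left _ _
        _ ≤ _ := by linarith
    · have hm1 := le_max_left 1 (1 / L)
      have hm2 := le_max_right 1 (1 / L)
      have hax : α ≤ 1 / L * |x| := by
        rw [div_mul_eq_mul_div, le_div_iff₀ hL0]; linarith
      have h1 := up (K' * |x|) (by positivity) (by nlinarith) (by nlinarith)
      have h2 := H.dblG (t := K' * |x|) hx0 hK1' (by rw [abs_of_pos (by positivity)])
      calc An n x ≤ (k + 3 * C₁) * (f (K' * |x|) / (K' * |x|)) := h1
        _ ≤ (k + 3 * C₁) * (K' ^ k * (f |x| / |x|)) := by gcongr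
        _ = ((k + 3 * C₁) * K' ^ k) * (f |x| / |x|) := by ring
        _ ≤ _ := by
          gcongr
          exact le_max_right _ _
end
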